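/- For every n ≥ 1, the thickness of the complete tripartite graph K_{1,n,n} equals ⌈(n+2)/4⌉. -/

import Mathlib

open SimpleGraph

/-- A simple graph is planar if it admits a drawing in the plane: an injective
placement of vertices and, for each edge, an injective continuous arc joining
the images of its endpoints, such that arcs avoid vertex images in their
interiors and distinct arcs meet only at vertex images. -/
def IsPlanar {V : Type*} (G : SimpleGraph V) : Prop :=
  ∃ (f : V → ℝ × ℝ) (γ : G.edgeSet → (Set.Icc (0:ℝ) 1 → ℝ × ℝ)),
    Function.Injective f ∧
    (∀ e : G.edgeSet, Continuous (γ e)) ∧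
    (∀ e : G.edgeSet, ∃ u v : V, (e : Sym2 V) = s(u, v) ∧
      γ e ⟨0, by norm_num⟩ = f u ∧ γ e ⟨1, by norm_num⟩ = f v) ∧
    (∀ e : G.edgeSet, Function.Injective (γ e)) ∧
    (∀ e : G.edgeSet, ∀ t : Set.Icc (0:ℝ) 1, (t : ℝ) ≠ 0 → (t : ℝ) ≠ 1 →
      ∀ v : V, γ e t ≠ f v) ∧
    (∀ e e' : G.edgeSet, e ≠ e' → ∀ s t : Set.Icc (0:ℝ) 1,
      γ e s = γ e' t → γ e s ∈ Set.range f)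

/-- The thickness of a graph: the least `n` such that `G` is the union of `n`
planar subgraphs. -/
noncomputable def thickness {V : Type*} (G : SimpleGraph V) : ℕ :=
  sInf {n : ℕ | ∃ H : Fin n → SimpleGraph V,
    (∀ i, H i ≤ G) ∧ (∀ i, IsPlanar (H i)) ∧ (⨆ i, H i) = G}

/-
Lower bound: a planar triangle-free graph on `v ≥ 3` vertices has at most `2v - 4` edges, so a
decomposition of `K_{n,n}` into `m` planar graphs forces `n² ≤ m(4n - 4)`. Planarity is only used to
obtain an algebraic dual. After thickening the vertices and shortening the edges of a drawing, the
squares of a fine grid that meet them exhibit the graph as a minor of the square grid. The grid has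
a dual, duals pass to minors, and a dual yields Euler's inequality by counting dimensions of cycle
and cut spaces mod 2.

Upper bound: for `n ≤ 4k + 2` the graph is the union of `k + 1` graphs drawn on two-page books. The
indices below `4k` are cut into `k` blocks of four. The layer of a block takes those of its edges to
the other blocks that are selected by parity, together with most edges inside it, and the last layer
takes all that is left.
-/

/-! ### Algebraic duals and minors -/

/-- A multigraph with loops, on vertices `V` and edges `E`. The orientation of the edges is only a
way to encode their pairs of ends: everything below is over `ZMod 2`. -/
structure Multigraph (V E : Type*) where
  src : E → V
  tgt : E → V

namespace Multigraph

universe u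

variable {V W E E' : Type*} {F : Type u}

/-- The unordered pair of ends of an edge. -/
def ends (Γ : Multigraph V E) (e : E) : Sym2 V := s(Γ.src e, Γ.tgt e)

/-- The multigraph obtained by renaming, and possibly identifying, the vertices along `f`. -/
def map (f : V → W) (Γ : Multigraph V E) : Multigraph W E := ⟨f ∘ Γ.src, f ∘ Γ.tgt⟩

/-- The multigraph obtained by pulling the edges back along `ρ`; for injective `ρ`, the spanning
subgraph with edge set `Set.range ρ`. -/
def comap (ρ : E' → E) (Γ : Multigraph V E) : Multigraph V E' := ⟨Γ.src ∘ ρ, Γ.tgt ∘ ρ⟩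

/-- The edges with both ends in `A`. -/
def edgesIn (Γ : Multigraph V E) (A : Set V) : Set E := {e | Γ.src e ∈ A ∧ Γ.tgt e ∈ A}

/-- The boundary of mod 2 chains; its kernel is the cycle space. -/
noncomputable def boundary (Γ : Multigraph V E) : (E →₀ ZMod 2) →ₗ[ZMod 2] V →₀ ZMod 2 :=
  Finsupp.lmapDomain _ _ Γ.src + Finsupp.lmapDomain _ _ Γ.tgt

/-- The coboundary of mod 2 cochains, which may have infinite support; its range is the cut
space. -/
def coboundary (Γ : Multigraph V E) : (V → ZMod 2) →ₗ[ZMod 2] E → ZMod 2 :=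
  LinearMap.funLeft _ _ Γ.src + LinearMap.funLeft _ _ Γ.tgt

/-- Whitney's algebraic duality: two multigraphs on the same edges are dual if the cycles of `Γ`
are the finite cuts of `Γ'`. -/
def IsDual (Γ : Multigraph V E) (Γ' : Multigraph F E) : Prop :=
  ∀ z : E →₀ ZMod 2, Γ.boundary z = 0 ↔ ∃ w : F → ZMod 2, Γ'.coboundary w = z

lemma boundary_apply (Γ : Multigraph V E) (z : E →₀ ZMod 2) :
    Γ.boundary z = z.mapDomain Γ.src + z.mapDomain Γ.tgt := rfl

lemma coboundary_apply (Γ : Multigraph V E) (w : V → ZMod 2) (e : E) :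
    Γ.coboundary w e = w (Γ.src e) + w (Γ.tgt e) := rfl

lemma boundary_single (Γ : Multigraph V E) (e : E) (a : ZMod 2) :
    Γ.boundary (.single e a) = .single (Γ.src e) a + .single (Γ.tgt e) a := by
  simp only [boundary_apply, Finsupp.mapDomain_single]

lemma boundary_map (Γ : Multigraph V E) (f : V → W) (z : E →₀ ZMod 2) :
    (Γ.map f).boundary z = (Γ.boundary z).mapDomain f := by
  simp only [boundary_apply, map, Finsupp.mapDomain_comp, Finsupp.mapDomain_add]

lemma boundary_comap (Γ : Multigraph V E) (ρ : E' → E) (z : E' →₀ ZMod 2) :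
    (Γ.comap ρ).boundary z = Γ.boundary (z.mapDomain ρ) := by
  simp only [boundary_apply, comap, Finsupp.mapDomain_comp]

lemma boundary_eq_of_ends_eq {Γ Γ' : Multigraph V E} (h : Γ.ends = Γ'.ends) :
    Γ.boundary = Γ'.boundary := by
  refine Finsupp.lhom_ext fun e a => ?_
  rw [boundary_single, boundary_single]
  rcases Sym2.eq_iff.mp (congrFun h e) with ⟨hs, ht⟩ | ⟨hs, ht⟩
  · rw [hs, ht]
  · rw [hs, ht, add_comm]

lemma boundary_eq_zero_of_loops {Γ : Multigraph V E} {z : E →₀ ZMod 2}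
    (h : ∀ e ∈ z.support, Γ.src e = Γ.tgt e) : Γ.boundary z = 0 := by
  rw [boundary_apply, Finsupp.mapDomain_congr h, ZModModule.add_self]

/-- `Γ.Linked A a b`: the vertices `a` and `b` are joined by a walk all of whose edges have both
ends in `A`. The trivial walk is allowed at every vertex, also outside of `A`. -/
def Linked (Γ : Multigraph V E) (A : Set V) : V → V → Prop :=
  Relation.EqvGen fun x y => ∃ e ∈ Γ.edgesIn A, Γ.src e = x ∧ Γ.tgt e = y

lemma Linked.exists_chain {Γ : Multigraph V E} {A : Set V} {a b : V} (h : Γ.Linked A a b) :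
    ∃ c ∈ Finsupp.supported (ZMod 2) (ZMod 2) (Γ.edgesIn A),
      Γ.boundary c = .single a 1 + .single b 1 := by
  induction h with
  | rel x y h =>
    obtain ⟨e, he, rfl, rfl⟩ := h
    exact ⟨.single e 1, Finsupp.single_mem_supported _ _ he, boundary_single Γ e 1⟩
  | refl x => exact ⟨0, zero_mem _, by rw [map_zero, ZModModule.add_self]⟩
  | symm x y _ ih => simpa only [add_comm] using ih
  | trans x y z _ _ ih₁ ih₂ =>
    obtain ⟨c₁, hc₁, h₁⟩ := ih₁
    obtain ⟨c₂, hc₂, h₂⟩ := ih₂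
    refine ⟨c₁ + c₂, add_mem hc₁ hc₂, ?_⟩
    rw [map_add, h₁, h₂, ZModModule.add_add_add_cancel]

/-- `H` is a minor of `Γ`: the vertices mapped to `some v` by `π` form the branch set contracted to
the vertex `v` of `H`, those mapped to `none` are deleted, and the edge `e` of `H` comes from the
edge `ρ e` of `Γ`. Branch sets are required to span finitely many edges only. -/
structure IsMinorModel (Γ : Multigraph W E') (H : Multigraph V E) (π : W → Option V)
    (ρ : E → E') : Prop where
  exists_mem : ∀ v, ∃ x, π x = some v
  linked : ∀ {v x y}, π x = some v → π y = some v → Γ.Linked {x | π x = some v} x y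
  injective : ρ.Injective
  ends_eq : ((Γ.map π).comap ρ).ends = (H.map some).ends
  finite_edgesIn : (⋃ v, Γ.edgesIn {x | π x = some v}).Finite

namespace IsMinorModel

variable {Γ : Multigraph W E'} {H : Multigraph V E} {π : W → Option V} {ρ : E → E'}

lemma exists_branch_chain (h : IsMinorModel Γ H π ρ) {v : V} {x y : W} (hx : π x = some v)
    (hy : π y = some v) :
    ∃ c ∈ Finsupp.supported (ZMod 2) (ZMod 2) (⋃ v, Γ.edgesIn {x | π x = some v}),
      Γ.boundary c = .single x 1 + .single y 1 := by
  obtain ⟨c, hc, hb⟩ := (h.linked hx hy).exists_chain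
  exact ⟨c, Finsupp.supported_mono (Set.subset_iUnion _ v) hc, hb⟩

lemma exists_edge_lift (h : IsMinorModel Γ H π ρ) {root : V → W}
    (hroot : ∀ v, π (root v) = some v) (e : E) :
    ∃ c ∈ Finsupp.supported (ZMod 2) (ZMod 2) (⋃ v, Γ.edgesIn {x | π x = some v}),
      Γ.boundary (.single (ρ e) 1 + c) =
        .single (root (H.src e)) 1 + .single (root (H.tgt e)) 1 := by
  have aux {x y : W} {u v : V} (hx : π x = some u) (hy : π y = some v)
      (hxy : Γ.boundary (.single (ρ e) 1) = .single x 1 + .single y 1) :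
      ∃ c ∈ Finsupp.supported (ZMod 2) (ZMod 2) (⋃ v, Γ.edgesIn {x | π x = some v}),
        Γ.boundary (.single (ρ e) 1 + c) = .single (root u) 1 + .single (root v) 1 := by
    obtain ⟨c₁, hc₁, h₁⟩ := h.exists_branch_chain (hroot u) hx
    obtain ⟨c₂, hc₂, h₂⟩ := h.exists_branch_chain hy (hroot v)
    refine ⟨c₁ + c₂, add_mem hc₁ hc₂, ?_⟩
    rw [← add_assoc, add_comm (Finsupp.single (ρ e) 1), map_add, map_add, h₁, hxy, h₂,
      ZModModule.add_add_add_cancel, ZModModule.add_add_add_cancel]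
  rcases Sym2.eq_iff.mp (congrFun h.ends_eq e) with ⟨hs, ht⟩ | ⟨hs, ht⟩
  · exact aux hs ht (boundary_single Γ _ 1)
  · exact aux ht hs ((boundary_single Γ _ 1).trans (add_comm _ _))

lemma exists_lift (h : IsMinorModel Γ H π ρ) {root : V → W} (hroot : ∀ v, π (root v) = some v)
    (y : E →₀ ZMod 2) :
    ∃ c ∈ Finsupp.supported (ZMod 2) (ZMod 2) (⋃ v, Γ.edgesIn {x | π x = some v}),
      Γ.boundary (y.mapDomain ρ + c) = (H.boundary y).mapDomain root := by
  induction y using Finsupp.induction_linear with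
  | zero => exact ⟨0, zero_mem _, by simp only [Finsupp.mapDomain_zero, map_zero, add_zero]⟩
  | add y₁ y₂ ih₁ ih₂ =>
    obtain ⟨c₁, hc₁, h₁⟩ := ih₁
    obtain ⟨c₂, hc₂, h₂⟩ := ih₂
    refine ⟨c₁ + c₂, add_mem hc₁ hc₂, ?_⟩
    rw [Finsupp.mapDomain_add, add_add_add_comm, map_add, h₁, h₂, map_add, Finsupp.mapDomain_add]
  | single e a =>
    obtain ⟨c, hc, hb⟩ := h.exists_edge_lift hroot e
    refine ⟨a • c, Submodule.smul_mem _ a hc, ?_⟩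
    have hsmul (x : W) : Finsupp.single x a = a • Finsupp.single x (1 : ZMod 2) := by
      rw [Finsupp.smul_single_one]
    rw [boundary_single, Finsupp.mapDomain_add, Finsupp.mapDomain_single, Finsupp.mapDomain_single,
      Finsupp.mapDomain_single, hsmul, hsmul, ← smul_add, ← hb, ← map_smul, smul_add,
      Finsupp.smul_single_one]

lemma boundary_comp_eq_zero (h : IsMinorModel Γ H π ρ) {z : E' →₀ ZMod 2}
    (hz : Γ.boundary z = 0)
    (hsupp : ∀ d ∉ Set.range ρ ∪ ⋃ v, Γ.edgesIn {x | π x = some v}, z d = 0) :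
    H.boundary (z.comapDomain ρ h.injective.injOn) = 0 := by
  set y := z.comapDomain ρ h.injective.injOn with hy
  have hinner : (Γ.map π).boundary (z - y.mapDomain ρ) = 0 := by
    refine boundary_eq_zero_of_loops fun d hd => ?_
    rw [Finsupp.mem_support_iff, Finsupp.sub_apply] at hd
    have hdρ : d ∉ Set.range ρ := by
      rintro ⟨e, rfl⟩
      rw [Finsupp.mapDomain_apply h.injective, hy, Finsupp.comapDomain_apply, sub_self] at hd
      exact hd rfl
    rw [Finsupp.mapDomain_of_notMem_range _ _ hdρ, sub_zero] at hd
    obtain ⟨v, hs, ht⟩ := Set.mem_iUnion.mp ((not_not.mp (mt (hsupp d) hd)).resolve_left hdρ)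
    exact hs.trans ht.symm
  refine Finsupp.mapDomain_injective (Option.some_injective V) ?_
  calc (H.boundary y).mapDomain some
      = (H.map some).boundary y := (boundary_map _ _ _).symm
    _ = ((Γ.map π).comap ρ).boundary y := by rw [boundary_eq_of_ends_eq h.ends_eq]
    _ = (Γ.map π).boundary (y.mapDomain ρ) := boundary_comap _ _ _
    _ = (Γ.map π).boundary z := (sub_eq_zero.mp (by rw [← map_sub, hinner])).symm
    _ = Finsupp.mapDomain some 0 := by
      rw [boundary_map, hz, Finsupp.mapDomain_zero, Finsupp.mapDomain_zero]

lemma notMem_edgesIn (h : IsMinorModel Γ H π ρ) (hloop : ∀ e, H.src e ≠ H.tgt e) (e : E) :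
    ρ e ∉ ⋃ v, Γ.edgesIn {x | π x = some v} := by
  intro he
  obtain ⟨v, hs, ht⟩ := Set.mem_iUnion.mp he
  have hends : s(some v, some v) = s(some (H.src e), some (H.tgt e)) := by
    rw [← show π (Γ.src (ρ e)) = some v from hs]
    nth_rw 2 [hs]
    rw [← show π (Γ.tgt (ρ e)) = some v from ht]
    exact congrFun h.ends_eq e
  simp only [Sym2.eq_iff, Option.some.injEq, ← and_comm (a := v = H.tgt e), or_self] at hends
  exact hloop e (hends.2.symm.trans hends.1)

/-- Duality turns contraction into deletion and deletion into contraction, so the dual of a minor is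
a quotient of the vertices of a dual. -/
theorem exists_isDual [Finite E] (h : IsMinorModel Γ H π ρ) (hloop : ∀ e, H.src e ≠ H.tgt e)
    {Γ' : Multigraph F E'} (hdual : Γ.IsDual Γ') :
    ∃ (F' : Type u) (H' : Multigraph F' E), H.IsDual H' := by
  set I := ⋃ v, Γ.edgesIn {x | π x = some v}
  let R (a b : F) : Prop := ∃ d ∉ Set.range ρ ∪ I, Γ'.src d = a ∧ Γ'.tgt d = b
  refine ⟨Quot R, (Γ'.map (Quot.mk R)).comap ρ, fun y => ⟨fun hy => ?_, ?_⟩⟩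
  · choose root hroot using h.exists_mem
    obtain ⟨c, hc, hbd⟩ := h.exists_lift hroot y
    rw [hy, Finsupp.mapDomain_zero] at hbd
    obtain ⟨w, hw⟩ := (hdual _).mp hbd
    have hc0 : ∀ d ∉ I, c d = 0 := fun d hd => Finsupp.notMem_support_iff.mp fun h => hd (hc h)
    have hwR : ∀ a b, R a b → w a = w b := by
      rintro _ _ ⟨d, hd, rfl, rfl⟩
      rw [Set.mem_union, not_or] at hd
      have := congrFun hw d
      rw [Finsupp.add_apply, hc0 d hd.2, Finsupp.mapDomain_of_notMem_range _ _ hd.1, add_zero,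
        coboundary_apply] at this
      exact CharTwo.add_eq_zero.mp this
    refine ⟨Quot.lift w hwR, funext fun e => ?_⟩
    rw [show y e = (y.mapDomain ρ + c) (ρ e) by
      rw [Finsupp.add_apply, Finsupp.mapDomain_apply h.injective,
        hc0 _ (h.notMem_edgesIn hloop e), add_zero], ← hw]
    rfl
  · rintro ⟨w, hw⟩
    have hsupp : ∀ d ∉ Set.range ρ ∪ I, Γ'.coboundary (w ∘ Quot.mk R) d = 0 := fun d hd => by
      rw [coboundary_apply, Function.comp_apply, Function.comp_apply,
        Quot.sound (show R _ _ from ⟨d, hd, rfl, rfl⟩), CharTwo.add_self_eq_zero]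
    let z : E' →₀ ZMod 2 := Finsupp.ofSupportFinite (Γ'.coboundary (w ∘ Quot.mk R))
      (((Set.finite_range ρ).union h.finite_edgesIn).subset
        (Function.support_subset_iff'.mpr hsupp))
    convert h.boundary_comp_eq_zero ((hdual z).mpr ⟨_, rfl⟩) hsupp using 2
    ext e
    rw [← hw]
    rfl

end IsMinorModel

end Multigraph

namespace Multigraph

/-- The square grid on `ℤ × ℤ`: the edge `(x, false)` leaves `x` to the right and the edge
`(x, true)` leaves `x` upwards. -/
def grid : Multigraph (ℤ × ℤ) ((ℤ × ℤ) × Bool) where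
  src e := e.1
  tgt e := e.1 + bif e.2 then (0, 1) else (1, 0)

/-- The planar dual of the square grid: an edge is incident with the unit squares on its two sides,
each named by its lower left corner. -/
def gridDual : Multigraph (ℤ × ℤ) ((ℤ × ℤ) × Bool) where
  src e := e.1
  tgt e := e.1 - bif e.2 then (1, 0) else (0, 1)

lemma grid_boundary_apply (z : (ℤ × ℤ) × Bool →₀ ZMod 2) (i j : ℤ) :
    grid.boundary z (i, j) =
      z ((i, j), false) + z ((i, j), true) + z ((i - 1, j), false) + z ((i, j - 1), true) := by
  induction z using Finsupp.induction_linear with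
  | zero => simp only [map_zero, Finsupp.coe_zero, Pi.zero_apply, add_zero]
  | add f g hf hg =>
    simp only [map_add, Finsupp.add_apply, hf, hg]
    ring
  | single e a =>
    obtain ⟨⟨k, l⟩, b⟩ := e
    cases b <;>
      simp [boundary_single, grid, Finsupp.single_apply, ← eq_sub_iff_add_eq]

lemma gridDual_coboundary_false (w : ℤ × ℤ → ZMod 2) (i j : ℤ) :
    gridDual.coboundary w ((i, j), false) = w (i, j) + w (i, j - 1) := by
  simp [coboundary_apply, gridDual]

lemma gridDual_coboundary_true (w : ℤ × ℤ → ZMod 2) (i j : ℤ) :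
    gridDual.coboundary w ((i, j), true) = w (i, j) + w (i - 1, j) := by
  simp [coboundary_apply, gridDual]

lemma grid_boundary_eq_zero_of_coboundary {w : ℤ × ℤ → ZMod 2} {z : (ℤ × ℤ) × Bool →₀ ZMod 2}
    (hw : gridDual.coboundary w = z) : grid.boundary z = 0 := by
  ext ⟨i, j⟩
  rw [grid_boundary_apply, ← hw]
  simp only [gridDual_coboundary_false, gridDual_coboundary_true, Finsupp.coe_zero, Pi.zero_apply]
  linear_combination (w (i, j) + w (i, j - 1) + w (i - 1, j) + w (i - 1, j - 1)) *
    CharTwo.two_eq_zero (R := ZMod 2)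

/-- The value of `w` on a unit square counts the horizontal edges of the cycle below it. -/
lemma exists_coboundary_of_grid_boundary_eq_zero {z : (ℤ × ℤ) × Bool →₀ ZMod 2}
    (hz : grid.boundary z = 0) : ∃ w, gridDual.coboundary w = z := by
  obtain ⟨N, hN⟩ : ∃ N, ∀ i j b, j ≤ N → z ((i, j), b) = 0 := by
    obtain ⟨N, hN⟩ := (z.support.image fun e => e.1.2).bddBelow
    refine ⟨N - 1, fun i j b hj => Finsupp.notMem_support_iff.mp fun hmem => ?_⟩
    have := hN (Finset.mem_coe.mpr (Finset.mem_image_of_mem _ hmem))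
    lia
  let w (c : ℤ × ℤ) : ZMod 2 := ∑ k ∈ Finset.Ioc N c.2, z ((c.1, k), false)
  have w_of_le {i j : ℤ} (hj : j ≤ N) : w (i, j) = 0 := by
    simp only [w, Finset.Ioc_eq_empty (not_lt.mpr hj), Finset.sum_empty]
  have w_step (i j : ℤ) : w (i, j) = w (i, j - 1) + z ((i, j), false) := by
    rcases le_or_gt j N with hj | hj
    · rw [w_of_le hj, w_of_le (by lia), hN _ _ _ hj, add_zero]
    · simp only [w, ← Finset.insert_Ioc_sub_one_right_eq_Ioc hj]
      rw [Finset.sum_insert (by simp), add_comm]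
  have w_side (i j : ℤ) : w (i, j) + w (i - 1, j) = z ((i, j), true) := by
    rcases le_total j N with hj | hj
    · rw [w_of_le hj, w_of_le hj, hN _ _ _ hj, add_zero]
    · induction j, hj using Int.leInduction with
      | base => rw [w_of_le le_rfl, w_of_le le_rfl, hN _ _ _ le_rfl, add_zero]
      | succ j _ ih =>
        have hcycle := DFunLike.congr_fun hz (i, j + 1)
        rw [grid_boundary_apply, add_sub_cancel_right, Finsupp.zero_apply] at hcycle
        rw [w_step i, w_step (i - 1), add_sub_cancel_right]
        linear_combination ih + hcycle -
          z ((i, j + 1), true) * CharTwo.two_eq_zero (R := ZMod 2)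
  refine ⟨w, funext fun ⟨⟨i, j⟩, b⟩ => ?_⟩
  cases b
  · rw [gridDual_coboundary_false, w_step i j, add_right_comm, CharTwo.add_self_eq_zero, zero_add]
  · rw [gridDual_coboundary_true, w_side]

theorem grid_isDual : grid.IsDual gridDual := fun _ =>
  ⟨exists_coboundary_of_grid_boundary_eq_zero,
    fun ⟨_, hw⟩ => grid_boundary_eq_zero_of_coboundary hw⟩

end Multigraph

/-! ### Fat minors -/

/-- `H` is a fat minor of the space `X` with connected sets `Conn`: vertices of `H` are thickened to
pairwise disjoint connected sets `K v`, and edges to pairwise disjoint connected sets `M e`, each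
meeting the sets of its two ends and of no other vertex. -/
structure IsFatMinor {V E X : Type*} (Conn : Set X → Prop) (H : Multigraph V E) (K : V → Set X)
    (M : E → Set X) : Prop where
  nonempty : ∀ v, (K v).Nonempty
  conn_vertex : ∀ v, Conn (K v)
  conn_edge : ∀ e, Conn (M e)
  disjoint_vertex : Pairwise fun u v => Disjoint (K u) (K v)
  disjoint_edge : Pairwise fun e e' => Disjoint (M e) (M e')
  disjoint_edge_vertex : ∀ ⦃e v⦄, v ≠ H.src e → v ≠ H.tgt e → Disjoint (M e) (K v)
  inter_src : ∀ e, (M e ∩ K (H.src e)).Nonempty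
  inter_tgt : ∀ e, (M e ∩ K (H.tgt e)).Nonempty

namespace Multigraph

variable {V W E E' : Type*}

namespace Linked

variable {Γ : Multigraph W E'} {A A' C : Set W} {x y z : W}

lemma refl (x : W) : Γ.Linked A x x := Relation.EqvGen.refl x

lemma symm (h : Γ.Linked A x y) : Γ.Linked A y x := Relation.EqvGen.symm _ _ h

lemma trans (h : Γ.Linked A x y) (h' : Γ.Linked A y z) : Γ.Linked A x z :=
  Relation.EqvGen.trans _ _ _ h h'

lemma of_edge {d : E'} (hd : d ∈ Γ.edgesIn A) : Γ.Linked A (Γ.src d) (Γ.tgt d) :=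
  Relation.EqvGen.rel _ _ ⟨d, hd, rfl, rfl⟩

lemma mono (hA : A ⊆ A') (h : Γ.Linked A x y) : Γ.Linked A' x y :=
  Relation.EqvGen.mono (fun _ _ ⟨d, hd, hs⟩ => ⟨d, ⟨hA hd.1, hA hd.2⟩, hs⟩) _ _ h

lemma mem_iff_of_edges (h : Γ.Linked A x y)
    (hC : ∀ d ∈ Γ.edgesIn A, Γ.src d ∈ C ↔ Γ.tgt d ∈ C) : x ∈ C ↔ y ∈ C := by
  induction h with
  | rel x y h =>
    obtain ⟨d, hd, rfl, rfl⟩ := h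
    exact hC d hd
  | refl => exact Iff.rfl
  | symm _ _ _ ih => exact ih.symm
  | trans _ _ _ _ _ ih₁ ih₂ => exact ih₁.trans ih₂

lemma mem_iff (h : Γ.Linked A x y) : x ∈ A ↔ y ∈ A :=
  h.mem_iff_of_edges fun _ hd => iff_of_true hd.1 hd.2

lemma linked_component (h : Γ.Linked A x y) : Γ.Linked {z | Γ.Linked A x z} x y := by
  suffices h' : ∀ {a b}, Γ.Linked A a b → Γ.Linked A x a → Γ.Linked {z | Γ.Linked A x z} a b from
    h' h (.refl x)
  intro a b hab
  induction hab with
  | rel a b hab =>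
    obtain ⟨d, hd, rfl, rfl⟩ := hab
    exact fun hx => of_edge ⟨hx, hx.trans (of_edge hd)⟩
  | refl a => exact fun _ => .refl a
  | symm a b hab ih => exact fun hx => (ih (hx.trans (Linked.symm hab))).symm
  | trans a b c hab _ ih₁ ih₂ => exact fun hx => (ih₁ hx).trans (ih₂ (hx.trans hab))

end Linked

/-- A set of vertices is linked if any two of its vertices are joined by a walk inside it. -/
def IsLinked (Γ : Multigraph W E') (A : Set W) : Prop := ∀ x ∈ A, ∀ y ∈ A, Γ.Linked A x y

/-- The sets `K v`, each enlarged by the sets `C e` of the edges `e` leaving `v`. -/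
def absorbEdges (H : Multigraph V E) (K : V → Set W) (C : E → Set W) (v : V) : Set W :=
  K v ∪ ⋃ e, ⋃ _ : H.src e = v, C e

variable {Γ : Multigraph W E'} {H : Multigraph V E} {K : V → Set W} {M C : E → Set W}

lemma isLinked_component (Γ : Multigraph W E') (A : Set W) (x : W) :
    Γ.IsLinked {z | Γ.Linked A x z} := fun _ hy _ hz =>
  hy.linked_component.symm.trans hz.linked_component

lemma IsLinked.exists_piece_sdiff {A B : Set W} (hA : Γ.IsLinked A) {x y : W} (hx : x ∈ A \ B)
    (hy : y ∈ A ∩ B) :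
    ∃ C ⊆ A \ B, Γ.IsLinked C ∧ x ∈ C ∧ ∃ d, ∃ a ∈ C, ∃ b ∈ A ∩ B, Γ.ends d = s(a, b) := by
  set C := {z | Γ.Linked (A \ B) x z}
  have hC : C ⊆ A \ B := fun z hz => hz.mem_iff.mp hx
  have hcross : ∃ d ∈ Γ.edgesIn A, ¬(Γ.src d ∈ C ↔ Γ.tgt d ∈ C) := by
    by_contra! h
    exact (hC (((hA x hx.1 y hy.1).mem_iff_of_edges h).mp (.refl x))).2 hy.2
  refine ⟨C, hC, Γ.isLinked_component _ x, .refl x, ?_⟩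
  obtain ⟨d, ⟨hs, ht⟩, hd⟩ := hcross
  rcases (xor_iff_not_iff _ _).mpr hd with ⟨ha, hb⟩ | ⟨ha, hb⟩
  · refine ⟨d, _, ha, _, ⟨ht, by_contra fun htB => hb ?_⟩, rfl⟩
    exact Linked.trans ha (.of_edge ⟨hC ha, ht, htB⟩)
  · refine ⟨d, _, ha, _, ⟨hs, by_contra fun hsB => hb ?_⟩, Sym2.eq_swap⟩
    exact Linked.trans ha (Linked.symm (.of_edge ⟨⟨hs, hsB⟩, hC ha⟩))

lemma subset_absorbEdges_src (e : E) : C e ⊆ H.absorbEdges K C (H.src e) := fun _ hz =>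
  Or.inr (Set.mem_iUnion₂.mpr ⟨e, rfl, hz⟩)

lemma pairwise_disjoint_absorbEdges (hK : Pairwise fun u v => Disjoint (K u) (K v))
    (hC : Pairwise fun e e' => Disjoint (C e) (C e'))
    (hCK : ∀ ⦃e v⦄, H.src e ≠ v → Disjoint (C e) (K v)) :
    Pairwise fun u v => Disjoint (H.absorbEdges K C u) (H.absorbEdges K C v) := fun u v huv => by
  simp only [absorbEdges, Set.disjoint_union_left, Set.disjoint_union_right,
    Set.disjoint_iUnion_left, Set.disjoint_iUnion_right]
  refine ⟨⟨hK huv, ?_⟩, ?_⟩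
  · rintro e rfl
    exact hCK huv
  · rintro e' rfl
    refine ⟨(hCK huv.symm).symm, ?_⟩
    rintro e rfl
    exact hC (ne_of_apply_ne _ huv)

lemma isLinked_absorbEdges (hK : ∀ v, Γ.IsLinked (K v)) (hC : ∀ e, Γ.IsLinked (C e))
    (hCK : ∀ e, (C e ∩ K (H.src e)).Nonempty) (v : V) : Γ.IsLinked (H.absorbEdges K C v) := by
  have hroot {x : W} (hx : x ∈ H.absorbEdges K C v) :
      ∃ y ∈ K v, Γ.Linked (H.absorbEdges K C v) x y := by
    rcases hx with hx | hx
    · exact ⟨x, hx, .refl x⟩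
    · obtain ⟨e, rfl, hxC⟩ := Set.mem_iUnion₂.mp hx
      obtain ⟨p, hpC, hpK⟩ := hCK e
      exact ⟨p, hpK, (hC e x hxC p hpC).mono (subset_absorbEdges_src e)⟩
  intro x hx y hy
  obtain ⟨x', hx', hxx'⟩ := hroot hx
  obtain ⟨y', hy', hyy'⟩ := hroot hy
  exact hxx'.trans (((hK v x' hx' y' hy').mono Set.subset_union_left).trans hyy'.symm)

lemma exists_isMinorModel_of_branchSets {B : V → Set W} {ρ : E → E'}
    (hne : ∀ v, (B v).Nonempty) (hlinked : ∀ v, Γ.IsLinked (B v))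
    (hdisj : Pairwise fun u v => Disjoint (B u) (B v)) (hρ : ρ.Injective)
    (hends : ∀ e, ∃ a ∈ B (H.src e), ∃ b ∈ B (H.tgt e), Γ.ends (ρ e) = s(a, b))
    (hfin : (⋃ v, Γ.edgesIn (B v)).Finite) :
    ∃ π, IsMinorModel Γ H π ρ := by
  obtain ⟨π, hπ⟩ : ∃ π : W → Option V, ∀ {x v}, π x = some v ↔ x ∈ B v := by
    classical
    refine ⟨fun x => if h : ∃ v, x ∈ B v then some h.choose else none, fun {x v} => ?_⟩
    dsimp only
    by_cases h : ∃ v, x ∈ B v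
    · rw [dif_pos h, Option.some_inj]
      refine ⟨fun hv => hv ▸ h.choose_spec, fun hv => ?_⟩
      exact by_contra fun hne => Set.disjoint_left.mp (hdisj hne) h.choose_spec hv
    · rw [dif_neg h]
      exact iff_of_false (Option.some_ne_none v).symm fun hv => h ⟨v, hv⟩
  have hfibre (v : V) : {x | π x = some v} = B v := Set.ext fun x => hπ
  refine ⟨π, fun v => ?_, fun {v x y} hx hy => ?_, hρ, funext fun e => ?_, ?_⟩
  · obtain ⟨x, hx⟩ := hne v
    exact ⟨x, hπ.mpr hx⟩
  · rw [hfibre]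
    exact hlinked v x (hπ.mp hx) y (hπ.mp hy)
  · obtain ⟨a, ha, b, hb, hab⟩ := hends e
    change Sym2.map π (Γ.ends (ρ e)) = s(some (H.src e), some (H.tgt e))
    rw [hab, Sym2.map_mk, hπ.mpr ha, hπ.mpr hb]
  · simpa only [hfibre] using hfin

/-- Each `M e` is cut just before it enters `K (H.tgt e)`, and its initial part is added to the
branch set of `H.src e`. -/
theorem exists_isMinorModel_of_isFatMinor [Finite V] [Finite E]
    (h : IsFatMinor Γ.IsLinked H K M) (hloop : ∀ e, H.src e ≠ H.tgt e)
    (hfin : ∀ A : Set W, A.Finite → (Γ.edgesIn A).Finite) (hK : ∀ v, (K v).Finite)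
    (hM : ∀ e, (M e).Finite) : ∃ π ρ, IsMinorModel Γ H π ρ := by
  choose p hpM hpK using h.inter_src
  choose q hq using h.inter_tgt
  have hp (e : E) : p e ∈ M e \ K (H.tgt e) :=
    ⟨hpM e, Set.disjoint_left.mp (h.disjoint_vertex (hloop e)) (hpK e)⟩
  choose C hC hClinked hpC ρ a ha b hb hab using fun e =>
    (h.conn_edge e).exists_piece_sdiff (hp e) (hq e)
  have hCM (e : E) : C e ⊆ M e := (hC e).trans Set.sdiff_subset
  have hCK ⦃e : E⦄ ⦃v : V⦄ (hv : H.src e ≠ v) : Disjoint (C e) (K v) := by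
    rcases eq_or_ne v (H.tgt e) with rfl | hv'
    · exact Set.disjoint_sdiff_left.mono_left (hC e)
    · exact (h.disjoint_edge_vertex hv.symm hv').mono_left (hCM e)
  have hρ : ρ.Injective := fun e e' hee => by
    by_contra hne
    have hmem : a e ∈ M e' := by
      rcases Sym2.eq_iff.mp ((hab e).symm.trans (hee ▸ hab e')) with ⟨h, -⟩ | ⟨h, -⟩ <;> rw [h]
      exacts [hCM e' (ha e'), (hb e').1]
    exact Set.disjoint_left.mp (h.disjoint_edge hne) (hCM e (ha e)) hmem
  have hBfin (v : V) : (H.absorbEdges K C v).Finite :=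
    (hK v).union (Set.finite_iUnion fun e => Set.finite_iUnion fun _ => (hM e).subset (hCM e))
  obtain ⟨π, hπ⟩ := exists_isMinorModel_of_branchSets (fun v => (h.nonempty v).inl)
    (isLinked_absorbEdges h.conn_vertex hClinked fun e => ⟨p e, hpC e, hpK e⟩)
    (pairwise_disjoint_absorbEdges h.disjoint_vertex
      (fun e e' hne => (h.disjoint_edge hne).mono (hCM e) (hCM e')) hCK) hρ
    (fun e => ⟨a e, subset_absorbEdges_src e (ha e), b e, Or.inl (hb e).2, hab e⟩)
    (Set.finite_iUnion fun v => hfin _ (hBfin v))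
  exact ⟨π, ρ, hπ⟩

end Multigraph

namespace Multigraph

lemma grid_linked_right {A : Set (ℤ × ℤ)} {i j : ℤ} (h : (i, j) ∈ A) (h' : (i + 1, j) ∈ A) :
    grid.Linked A (i, j) (i + 1, j) := by
  have htgt : grid.tgt ((i, j), false) = (i + 1, j) := by simp [grid]
  exact htgt ▸ Linked.of_edge (d := ((i, j), false)) ⟨h, htgt ▸ h'⟩

lemma grid_linked_up {A : Set (ℤ × ℤ)} {i j : ℤ} (h : (i, j) ∈ A) (h' : (i, j + 1) ∈ A) :
    grid.Linked A (i, j) (i, j + 1) := by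
  have htgt : grid.tgt ((i, j), true) = (i, j + 1) := by simp [grid]
  exact htgt ▸ Linked.of_edge (d := ((i, j), true)) ⟨h, htgt ▸ h'⟩

lemma finite_grid_edgesIn {A : Set (ℤ × ℤ)} (hA : A.Finite) : (grid.edgesIn A).Finite :=
  (hA.prod Set.finite_univ).subset fun _ he => ⟨he.1, Set.mem_univ _⟩

end Multigraph

/-- The closed square with lower left corner `c` of the subdivision of the plane into squares of
side `1 / L`. -/
def gridCell (L : ℝ) (c : ℤ × ℤ) : Set (ℝ × ℝ) :=
  {p | L * p.1 ∈ Set.Icc (c.1 : ℝ) (c.1 + 1) ∧ L * p.2 ∈ Set.Icc (c.2 : ℝ) (c.2 + 1)}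

/-- The squares of side `1 / L` meeting `X`: the picture of `X` at resolution `L`. -/
def cellsMeeting (L : ℝ) (X : Set (ℝ × ℝ)) : Set (ℤ × ℤ) := {c | (X ∩ gridCell L c).Nonempty}

section cellsMeeting

variable {L : ℝ} {X Y : Set (ℝ × ℝ)} {p : ℝ × ℝ}

lemma isClosed_gridCell (L : ℝ) (c : ℤ × ℤ) : IsClosed (gridCell L c) :=
  (isClosed_Icc.preimage (by fun_prop : Continuous fun p : ℝ × ℝ => L * p.1)).inter
    (isClosed_Icc.preimage (by fun_prop : Continuous fun p : ℝ × ℝ => L * p.2))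

lemma mem_gridCell_floor (L : ℝ) (p : ℝ × ℝ) : p ∈ gridCell L (⌊L * p.1⌋, ⌊L * p.2⌋) :=
  ⟨⟨Int.floor_le _, (Int.lt_floor_add_one _).le⟩, Int.floor_le _, (Int.lt_floor_add_one _).le⟩

lemma floor_mem_cellsMeeting (hp : p ∈ X) : (⌊L * p.1⌋, ⌊L * p.2⌋) ∈ cellsMeeting L X :=
  ⟨p, hp, mem_gridCell_floor L p⟩

lemma nonempty_cellsMeeting (hX : X.Nonempty) : (cellsMeeting L X).Nonempty :=
  hX.elim fun _ hp => ⟨_, floor_mem_cellsMeeting hp⟩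

lemma cellsMeeting_inter_subset : cellsMeeting L (X ∩ Y) ⊆ cellsMeeting L X ∩ cellsMeeting L Y :=
  fun _ ⟨p, hp, hc⟩ => ⟨⟨p, hp.1, hc⟩, p, hp.2, hc⟩

lemma finite_cellsMeeting (L : ℝ) (hX : IsCompact X) : (cellsMeeting L X).Finite := by
  obtain ⟨R, hR⟩ := (hX.image (continuous_const_smul L)).isBounded.exists_norm_le
  obtain ⟨N, hN⟩ := exists_nat_gt (R + 1)
  refine ((Set.finite_Icc (-(N : ℤ)) N).prod (Set.finite_Icc (-(N : ℤ)) N)).subset ?_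
  rintro ⟨i, j⟩ ⟨p, hp, ⟨h₁, h₂⟩, h₃, h₄⟩
  have hp := hR _ (Set.mem_image_of_mem _ hp)
  have h₅ := abs_le.mp ((norm_fst_le _).trans hp)
  have h₆ := abs_le.mp ((norm_snd_le _).trans hp)
  simp only [Prod.smul_fst, Prod.smul_snd, smul_eq_mul] at h₁ h₂ h₃ h₄ h₅ h₆
  refine ⟨⟨?_, ?_⟩, ?_, ?_⟩ <;> (rify; linarith)

lemma dist_le_of_mem_gridCell (hL : 0 < L) {c : ℤ × ℤ} {q : ℝ × ℝ} (hp : p ∈ gridCell L c)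
    (hq : q ∈ gridCell L c) : dist p q ≤ 1 / L := by
  have aux {x y a : ℝ} (hx : L * x ∈ Set.Icc a (a + 1)) (hy : L * y ∈ Set.Icc a (a + 1)) :
      dist x y ≤ 1 / L := by
    have hscale : L * dist x y = |L * x - L * y| := by
      rw [Real.dist_eq, ← mul_sub, abs_mul, abs_of_pos hL]
    rw [le_div_iff₀' hL, hscale, abs_le]
    constructor <;> linarith [hx.1, hx.2, hy.1, hy.2]
  exact max_le (aux hp.1 hq.1) (aux hp.2 hq.2)

lemma eventually_disjoint_cellsMeeting (hX : IsCompact X) (hY : IsCompact Y) (hXY : Disjoint X Y) :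
    ∀ᶠ L : ℝ in Filter.atTop, Disjoint (cellsMeeting L X) (cellsMeeting L Y) := by
  obtain ⟨r, hr, hfar⟩ := Metric.exists_pos_forall_lt_edist hX hY.isClosed hXY
  filter_upwards [Filter.eventually_gt_atTop 0, Filter.eventually_ge_atTop (1 / (r : ℝ))]
    with L hL hLr
  rw [Set.disjoint_left]
  rintro c ⟨p, hp, hpc⟩ ⟨q, hq, hqc⟩
  have hclose : dist p q ≤ r :=
    (dist_le_of_mem_gridCell hL hpc hqc).trans ((one_div_le hL (NNReal.coe_pos.mpr hr)).mpr hLr)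
  refine (hfar p hp q hq).not_ge ?_
  rw [edist_nndist]
  exact_mod_cast hclose

lemma linked_of_mem_gridCell (hp : p ∈ X) {c d : ℤ × ℤ} (hc : p ∈ gridCell L c)
    (hd : p ∈ gridCell L d) : Multigraph.grid.Linked (cellsMeeting L X) c d := by
  have near {x : ℝ} {a b : ℤ} (ha : x ∈ Set.Icc (a : ℝ) (a + 1))
      (hb : x ∈ Set.Icc (b : ℝ) (b + 1)) : b = a ∨ b = a + 1 ∨ a = b + 1 := by
    have h₁ : (a : ℝ) ≤ b + 1 := ha.1.trans hb.2
    have h₂ : (b : ℝ) ≤ a + 1 := hb.1.trans ha.2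
    norm_cast at h₁ h₂
    lia
  obtain ⟨i, j⟩ := c
  obtain ⟨k, l⟩ := d
  have hcX : (i, j) ∈ cellsMeeting L X := ⟨p, hp, hc⟩
  have hcdX : (i, l) ∈ cellsMeeting L X := ⟨p, hp, hc.1, hd.2⟩
  have hdX : (k, l) ∈ cellsMeeting L X := ⟨p, hp, hd⟩
  have hvert : Multigraph.grid.Linked (cellsMeeting L X) (i, j) (i, l) := by
    rcases near hc.2 hd.2 with h | h | h <;> simp only at h <;> subst h
    exacts [.refl _, Multigraph.grid_linked_up hcX hcdX, (Multigraph.grid_linked_up hcdX hcX).symm]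
  have hhor : Multigraph.grid.Linked (cellsMeeting L X) (i, l) (k, l) := by
    rcases near hc.1 hd.1 with h | h | h <;> simp only at h <;> subst h
    exacts [.refl _, Multigraph.grid_linked_right hcdX hdX,
      (Multigraph.grid_linked_right hdX hcdX).symm]
  exact hvert.trans hhor

lemma isLinked_cellsMeeting (L : ℝ) (hX : IsCompact X) (hconn : IsPreconnected X) :
    Multigraph.grid.IsLinked (cellsMeeting L X) := by
  intro a ha b hb
  by_contra hab
  let A := {c ∈ cellsMeeting L X | Multigraph.grid.Linked (cellsMeeting L X) a c}
  let B := cellsMeeting L X \ A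
  have hfin := finite_cellsMeeting L hX
  have hclosed {C : Set (ℤ × ℤ)} (hC : C ⊆ cellsMeeting L X) :
      IsClosed (⋃ c ∈ C, gridCell L c) :=
    (hfin.subset hC).isClosed_biUnion fun c _ => isClosed_gridCell L c
  have hmeet {C : Set (ℤ × ℤ)} {c : ℤ × ℤ} (hcX : c ∈ cellsMeeting L X) (hcC : c ∈ C) :
      (X ∩ ⋃ c ∈ C, gridCell L c).Nonempty :=
    hcX.mono (Set.inter_subset_inter_right X (Set.subset_biUnion_of_mem hcC))
  have hcover : X ⊆ (⋃ c ∈ A, gridCell L c) ∪ ⋃ c ∈ B, gridCell L c := fun p hp => by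
    rw [← Set.biUnion_union, Set.union_sdiff_cancel (Set.sep_subset _ _)]
    exact Set.mem_biUnion (floor_mem_cellsMeeting hp) (mem_gridCell_floor L p)
  obtain ⟨p, hp, hpA, hpB⟩ := isPreconnected_closed_iff.mp hconn _ _
    (hclosed (Set.sep_subset _ _)) (hclosed Set.sdiff_subset) hcover
    (hmeet ha ⟨ha, .refl a⟩) (hmeet hb ⟨hb, fun h => hab h.2⟩)
  obtain ⟨c, hc, hpc⟩ := Set.mem_iUnion₂.mp hpA
  obtain ⟨d, hd, hpd⟩ := Set.mem_iUnion₂.mp hpB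
  exact hd.2 ⟨hd.1, hc.2.trans (linked_of_mem_gridCell hp hpc hpd)⟩

end cellsMeeting

lemma IsFatMinor.eventually_cellsMeeting {V E : Type*} [Finite V] [Finite E] {H : Multigraph V E}
    {K : V → Set (ℝ × ℝ)} {M : E → Set (ℝ × ℝ)} (h : IsFatMinor IsPreconnected H K M)
    (hK : ∀ v, IsCompact (K v)) (hM : ∀ e, IsCompact (M e)) :
    ∀ᶠ L : ℝ in Filter.atTop, IsFatMinor Multigraph.grid.IsLinked H (fun v => cellsMeeting L (K v))
      fun e => cellsMeeting L (M e) := by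
  have hKK : ∀ᶠ L : ℝ in Filter.atTop, Pairwise fun u v =>
      Disjoint (cellsMeeting L (K u)) (cellsMeeting L (K v)) := by
    simp only [Pairwise, Filter.eventually_all]
    exact fun u v huv => eventually_disjoint_cellsMeeting (hK u) (hK v) (h.disjoint_vertex huv)
  have hMM : ∀ᶠ L : ℝ in Filter.atTop, Pairwise fun e e' =>
      Disjoint (cellsMeeting L (M e)) (cellsMeeting L (M e')) := by
    simp only [Pairwise, Filter.eventually_all]
    exact fun e e' hee => eventually_disjoint_cellsMeeting (hM e) (hM e') (h.disjoint_edge hee)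
  have hMK : ∀ᶠ L : ℝ in Filter.atTop, ∀ e v, v ≠ H.src e → v ≠ H.tgt e →
      Disjoint (cellsMeeting L (M e)) (cellsMeeting L (K v)) := by
    simp only [Filter.eventually_all]
    exact fun e v hs ht =>
      eventually_disjoint_cellsMeeting (hM e) (hK v) (h.disjoint_edge_vertex hs ht)
  filter_upwards [hKK, hMM, hMK] with L hKK hMM hMK
  exact
    { nonempty := fun v => nonempty_cellsMeeting (h.nonempty v)
      conn_vertex := fun v => isLinked_cellsMeeting L (hK v) (h.conn_vertex v)
      conn_edge := fun e => isLinked_cellsMeeting L (hM e) (h.conn_edge e)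
      disjoint_vertex := hKK
      disjoint_edge := hMM
      disjoint_edge_vertex := hMK
      inter_src := fun e =>
        (nonempty_cellsMeeting (h.inter_src e)).mono cellsMeeting_inter_subset
      inter_tgt := fun e =>
        (nonempty_cellsMeeting (h.inter_tgt e)).mono cellsMeeting_inter_subset }

/-- A multigraph that is thickly drawn in the plane is a minor of a fine enough square grid. -/
theorem IsFatMinor.exists_isDual {V E : Type*} [Finite V] [Finite E] {H : Multigraph V E}
    {K : V → Set (ℝ × ℝ)} {M : E → Set (ℝ × ℝ)} (h : IsFatMinor IsPreconnected H K M)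
    (hloop : ∀ e, H.src e ≠ H.tgt e) (hK : ∀ v, IsCompact (K v)) (hM : ∀ e, IsCompact (M e)) :
    ∃ (F : Type) (H' : Multigraph F E), H.IsDual H' := by
  obtain ⟨L, hL⟩ := (h.eventually_cellsMeeting hK hM).exists
  obtain ⟨π, ρ, hπ⟩ := Multigraph.exists_isMinorModel_of_isFatMinor hL hloop
    (fun _ => Multigraph.finite_grid_edgesIn) (fun v => finite_cellsMeeting L (hK v))
    (fun e => finite_cellsMeeting L (hM e))
  exact hπ.exists_isDual hloop Multigraph.grid_isDual

/-! ### Drawings -/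

/-- A drawing of a multigraph in the plane, with vertices at the points `f v` and edges along the
arcs `γ e`, as in the definition of planarity. -/
structure IsDrawing {V E : Type*} (H : Multigraph V E) (f : V → ℝ × ℝ)
    (γ : E → unitInterval → ℝ × ℝ) : Prop where
  injective : f.Injective
  continuous_arc : ∀ e, Continuous (γ e)
  injective_arc : ∀ e, (γ e).Injective
  arc_zero : ∀ e, γ e 0 = f (H.src e)
  arc_one : ∀ e, γ e 1 = f (H.tgt e)
  eq_zero_or_one : ∀ {e t v}, γ e t = f v → t = 0 ∨ t = 1
  mem_range : ∀ {e e' s t}, e ≠ e' → γ e s = γ e' t → γ e s ∈ Set.range f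

/-- The part of the arcs close to the vertex `v`: the initial pieces, up to time `a`, of the arcs
leaving `v`, and the final pieces, from time `b`, of the arcs arriving at `v`. -/
def thickVertex {V E : Type*} (H : Multigraph V E) (f : V → ℝ × ℝ) (γ : E → unitInterval → ℝ × ℝ)
    (a b : unitInterval) (v : V) : Set (ℝ × ℝ) :=
  {f v} ∪ ⋃ e, γ e '' {t | H.src e = v ∧ t ≤ a ∨ H.tgt e = v ∧ b ≤ t}

namespace IsDrawing

variable {V E : Type*} {H : Multigraph V E} {f : V → ℝ × ℝ} {γ : E → unitInterval → ℝ × ℝ}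
  {a b : unitInterval} {e e' : E} {s t : unitInterval} {u v : V} {x : ℝ × ℝ}

lemma src_ne_tgt (h : IsDrawing H f γ) (e : E) : H.src e ≠ H.tgt e := fun heq =>
  zero_ne_one (h.injective_arc e (by rw [h.arc_zero, h.arc_one, heq]))

lemma eq_and_eq_of_notMem_range (h : IsDrawing H f γ) (hx : γ e s ∉ Set.range f)
    (hst : γ e s = γ e' t) : e = e' ∧ s = t := by
  obtain rfl : e = e' := by_contra fun hne => hx (h.mem_range hne hst)
  exact ⟨rfl, h.injective_arc e hst⟩

lemma arc_notMem_range (h : IsDrawing H f γ) (h0 : t ≠ 0) (h1 : t ≠ 1) : γ e t ∉ Set.range f := by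
  rintro ⟨v, hv⟩
  exact (h.eq_zero_or_one hv.symm).elim h0 h1

lemma mem_thickVertex_self : f v ∈ thickVertex H f γ a b v := Or.inl rfl

lemma arc_mem_thickVertex_src (ht : t ≤ a) : γ e t ∈ thickVertex H f γ a b (H.src e) :=
  Or.inr (Set.mem_iUnion.mpr ⟨e, t, Or.inl ⟨rfl, ht⟩, rfl⟩)

lemma arc_mem_thickVertex_tgt (ht : b ≤ t) : γ e t ∈ thickVertex H f γ a b (H.tgt e) :=
  Or.inr (Set.mem_iUnion.mpr ⟨e, t, Or.inr ⟨rfl, ht⟩, rfl⟩)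

lemma exists_of_mem_thickVertex (hx : x ∉ Set.range f) (hxv : x ∈ thickVertex H f γ a b v) :
    ∃ e t, γ e t = x ∧ (H.src e = v ∧ t ≤ a ∨ H.tgt e = v ∧ b ≤ t) := by
  rcases hxv with rfl | hxv
  · exact absurd (Set.mem_range_self v) hx
  · obtain ⟨e, t, ht, rfl⟩ := Set.mem_iUnion.mp hxv
    exact ⟨e, t, rfl, ht⟩

lemma eq_of_mem_thickVertex (h : IsDrawing H f γ) (ha : a < 1) (hb : 0 < b)
    (huv : f u ∈ thickVertex H f γ a b v) : u = v := by
  rcases huv with huv | huv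
  · exact h.injective huv
  · obtain ⟨e, t, ht, hu⟩ := Set.mem_iUnion.mp huv
    refine h.injective (hu.symm.trans ?_)
    rcases h.eq_zero_or_one hu with rfl | rfl
    · rcases ht with ⟨rfl, -⟩ | ⟨-, ht⟩
      exacts [h.arc_zero e, absurd ht hb.not_ge]
    · rcases ht with ⟨-, ht⟩ | ⟨rfl, -⟩
      exacts [absurd ht ha.not_ge, h.arc_one e]

lemma isCompact_thickVertex [Finite E] (h : IsDrawing H f γ) (v : V) :
    IsCompact (thickVertex H f γ a b v) := by
  refine isCompact_singleton.union (isCompact_iUnion fun e => ?_)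
  refine (IsClosed.isCompact ?_).image (h.continuous_arc e)
  exact (isClosed_const.inter isClosed_Iic).union (isClosed_const.inter isClosed_Ici)

lemma isPreconnected_thickVertex (h : IsDrawing H f γ) (v : V) :
    IsPreconnected (thickVertex H f γ a b v) := by
  refine isPreconnected_of_forall (f v) fun x hx => ?_
  rcases hx with rfl | hx
  · exact ⟨{f v}, Set.singleton_subset_iff.mpr mem_thickVertex_self, rfl, rfl,
      isPreconnected_singleton⟩
  · obtain ⟨e, t, ⟨rfl, ht⟩ | ⟨rfl, ht⟩, rfl⟩ := Set.mem_iUnion.mp hx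
    · refine ⟨γ e '' Set.Iic a, ?_, ⟨0, unitInterval.nonneg', h.arc_zero e⟩, ⟨t, ht, rfl⟩,
        isPreconnected_Iic.image _ (h.continuous_arc e).continuousOn⟩
      rintro _ ⟨s, hs, rfl⟩
      exact arc_mem_thickVertex_src hs
    · refine ⟨γ e '' Set.Ici b, ?_, ⟨1, unitInterval.le_one', h.arc_one e⟩, ⟨t, ht, rfl⟩,
        isPreconnected_Ici.image _ (h.continuous_arc e).continuousOn⟩
      rintro _ ⟨s, hs, rfl⟩
      exact arc_mem_thickVertex_tgt hs

lemma disjoint_thickVertex (h : IsDrawing H f γ) (ha : 0 < a) (hab : a < b) (hb : b < 1)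
    (huv : u ≠ v) : Disjoint (thickVertex H f γ a b u) (thickVertex H f γ a b v) := by
  refine Set.disjoint_left.mpr fun x hxu hxv => huv ?_
  by_cases hx : x ∈ Set.range f
  · obtain ⟨w, rfl⟩ := hx
    have hcentre {v : V} (hv : f w ∈ thickVertex H f γ a b v) : w = v :=
      h.eq_of_mem_thickVertex (hab.trans hb) (ha.trans hab) hv
    exact (hcentre hxu).symm.trans (hcentre hxv)
  · obtain ⟨e, s, rfl, hs⟩ := exists_of_mem_thickVertex hx hxu
    obtain ⟨e', t, hst, ht⟩ := exists_of_mem_thickVertex hx hxv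
    obtain ⟨rfl, rfl⟩ := h.eq_and_eq_of_notMem_range hx hst.symm
    rcases hs with ⟨rfl, hs⟩ | ⟨rfl, hs⟩ <;> rcases ht with ⟨rfl, ht⟩ | ⟨rfl, ht⟩
    exacts [rfl, absurd (ht.trans hs) hab.not_ge, absurd (hs.trans ht) hab.not_ge, rfl]

theorem isFatMinor (h : IsDrawing H f γ) (ha : 0 < a) (hab : a < b) (hb : b < 1) :
    IsFatMinor IsPreconnected H (thickVertex H f γ a b) fun e => γ e '' Set.Icc a b := by
  have hmid {e : E} {t : unitInterval} (ht : t ∈ Set.Icc a b) : γ e t ∉ Set.range f :=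
    h.arc_notMem_range (ha.trans_le ht.1).ne' (ht.2.trans_lt hb).ne
  exact
    { nonempty := fun v => ⟨f v, mem_thickVertex_self⟩
      conn_vertex := h.isPreconnected_thickVertex
      conn_edge := fun e => isPreconnected_Icc.image _ (h.continuous_arc e).continuousOn
      disjoint_vertex := fun u v huv => h.disjoint_thickVertex ha hab hb huv
      disjoint_edge := fun e e' hee => Set.disjoint_left.mpr <| by
        rintro _ ⟨s, hs, rfl⟩ ⟨t, -, hst⟩
        exact hee (h.eq_and_eq_of_notMem_range (hmid hs) hst.symm).1
      disjoint_edge_vertex := fun e v hsrc htgt => Set.disjoint_left.mpr <| by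
        rintro _ ⟨s, hs, rfl⟩ hv
        obtain ⟨e', t, hst, ht⟩ := exists_of_mem_thickVertex (hmid hs) hv
        obtain ⟨rfl, rfl⟩ := h.eq_and_eq_of_notMem_range (hmid hs) hst.symm
        exact ht.elim (fun ht => hsrc ht.1.symm) fun ht => htgt ht.1.symm
      inter_src := fun e =>
        ⟨γ e a, Set.mem_image_of_mem _ ⟨le_rfl, hab.le⟩, arc_mem_thickVertex_src le_rfl⟩
      inter_tgt := fun e =>
        ⟨γ e b, Set.mem_image_of_mem _ ⟨hab.le, le_rfl⟩, arc_mem_thickVertex_tgt le_rfl⟩ }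

theorem exists_isDual [Finite V] [Finite E] (h : IsDrawing H f γ) :
    ∃ (F : Type) (H' : Multigraph F E), H.IsDual H' := by
  obtain ⟨b, hb0, hb1⟩ := exists_between (zero_lt_one (α := unitInterval))
  obtain ⟨a, ha, hab⟩ := exists_between hb0
  exact (h.isFatMinor ha hab hb1).exists_isDual h.src_ne_tgt h.isCompact_thickVertex
    fun e => isCompact_Icc.image (h.continuous_arc e)

end IsDrawing

lemma IsPlanar.exists_isDrawing {V : Type*} {G : SimpleGraph V} (hG : IsPlanar G) :
    ∃ (H : Multigraph V G.edgeSet) (f : V → ℝ × ℝ) (γ : G.edgeSet → unitInterval → ℝ × ℝ),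
      IsDrawing H f γ ∧ H.ends = Subtype.val := by
  obtain ⟨f, γ, hf, hcont, hends, hinj, hint, hmeet⟩ := hG
  choose src tgt hst h0 h1 using hends
  refine ⟨⟨src, tgt⟩, f, γ, ⟨hf, hcont, hinj, h0, h1, fun {e t v} htv => ?_,
    fun {e e' s t} hne hst => hmeet e e' hne s t hst⟩, funext fun e => (hst e).symm⟩
  by_contra! hcon
  exact hint e t (fun h => hcon.1 (Subtype.ext h)) (fun h => hcon.2 (Subtype.ext h)) v htv

/-! ### Euler's inequality -/

lemma finrank_span_image_lt_card_of_sum_eq_zero {R M ι : Type*} [Ring R] [StrongRankCondition R]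
    [AddCommGroup M] [Module R M] {s : Finset ι} {y : ι → M} (hs : s.Nonempty)
    (hsum : ∑ i ∈ s, y i = 0) : Module.finrank R (Submodule.span R (y '' s)) < s.card := by
  classical
  obtain ⟨i₀, hi₀⟩ := hs
  have hspan : Submodule.span R (y '' s) = Submodule.span R ((s.erase i₀).image y) := by
    refine le_antisymm (Submodule.span_le.mpr ?_) (Submodule.span_mono ?_)
    · have hmem {i : ι} (hi : i ∈ s.erase i₀) :
          y i ∈ Submodule.span R ((s.erase i₀).image y : Set M) :=
        Submodule.subset_span (Finset.mem_image_of_mem y hi)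
      rintro _ ⟨i, hi, rfl⟩
      by_cases h : i = i₀
      · rw [h, eq_neg_of_add_eq_zero_left ((Finset.add_sum_erase s y hi₀).trans hsum)]
        exact Submodule.neg_mem _ (Submodule.sum_mem _ fun i => hmem)
      · exact hmem (Finset.mem_erase.mpr ⟨h, hi⟩)
    · rw [Finset.coe_image]
      exact Set.image_mono (Finset.erase_subset i₀ s)
  calc Module.finrank R (Submodule.span R (y '' s))
      ≤ ((s.erase i₀).image y).card := hspan ▸ finrank_span_finset_le_card _
    _ ≤ (s.erase i₀).card := Finset.card_image_le
    _ < s.card := Finset.card_erase_lt_of_mem hi₀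

namespace Multigraph

variable {V E F F' : Type*}

lemma coboundary_map (Γ : Multigraph V E) (f : V → F) (w : F → ZMod 2) :
    (Γ.map f).coboundary w = Γ.coboundary (w ∘ f) := rfl

lemma IsDual.of_map {Γ : Multigraph V E} {Γ' : Multigraph F E} {f : F → F'} (hf : f.Injective)
    (h : Γ.IsDual (Γ'.map f)) : Γ.IsDual Γ' := fun z =>
  (h z).trans ⟨fun ⟨w, hw⟩ => ⟨w ∘ f, hw⟩, fun ⟨w, hw⟩ => ⟨Function.extend f w 0, by
    rw [coboundary_map, Function.extend_comp hf, hw]⟩⟩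

lemma IsDual.exists_finite [Finite E] {Γ : Multigraph V E} {Γ' : Multigraph F E}
    (h : Γ.IsDual Γ') :
    ∃ s : Set F, s.Finite ∧ ∃ Γ'' : Multigraph s E, Γ.IsDual Γ'' := by
  refine ⟨Set.range Γ'.src ∪ Set.range Γ'.tgt, (Set.finite_range _).union (Set.finite_range _),
    ⟨fun e => ⟨Γ'.src e, Or.inl ⟨e, rfl⟩⟩, fun e => ⟨Γ'.tgt e, Or.inr ⟨e, rfl⟩⟩⟩, ?_⟩
  exact IsDual.of_map Subtype.val_injective h

lemma card_edge_lt_finrank_ker_boundary_add [Fintype V] [Nonempty V] [Fintype E]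
    (Γ : Multigraph V E) :
    Fintype.card E < Module.finrank (ZMod 2) (LinearMap.ker Γ.boundary) + Fintype.card V := by
  let φ : (V →₀ ZMod 2) →ₗ[ZMod 2] ZMod 2 := Finsupp.linearCombination (ZMod 2) fun _ => 1
  have hφ (v : V) (a : ZMod 2) : φ (.single v a) = a := by
    rw [Finsupp.linearCombination_single, smul_eq_mul, mul_one]
  have hrange : LinearMap.range Γ.boundary ≤ LinearMap.ker φ := by
    rw [LinearMap.range_le_ker_iff]
    refine Finsupp.lhom_ext fun e a => ?_
    rw [LinearMap.comp_apply, boundary_single, map_add, hφ, hφ, CharTwo.add_self_eq_zero,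
      LinearMap.zero_apply]
  have hsurj : LinearMap.range φ = ⊤ :=
    LinearMap.range_eq_top.mpr fun a => ⟨.single (Classical.arbitrary V) a, hφ _ a⟩
  have hrank := Γ.boundary.finrank_range_add_finrank_ker
  have hrankφ := φ.finrank_range_add_finrank_ker
  have hle := Submodule.finrank_mono hrange
  rw [hsurj, finrank_top, Module.finrank_self, Module.finrank_finsupp_self] at hrankφ
  rw [Module.finrank_finsupp_self] at hrank
  lia

open Classical in
/-- The mod 2 cut formed by the edges at the vertex `v`, without its loops. -/
noncomputable def star (Γ : Multigraph V E) (v : V) : E → ZMod 2 := Γ.coboundary (Pi.single v 1)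

open Classical in
/-- The vertices incident with some edge that is not a loop. -/
noncomputable def nonisolated [Fintype V] (Γ : Multigraph V E) : Finset V :=
  {v | Γ.star v ≠ 0}

section Dual

variable [Fintype F] (Γ : Multigraph F E)

lemma mem_nonisolated {v : F} : v ∈ Γ.nonisolated ↔ Γ.star v ≠ 0 := by
  classical exact Finset.mem_filter_univ v

lemma coboundary_eq_sum (w : F → ZMod 2) :
    Γ.coboundary w = ∑ v ∈ Γ.nonisolated, w v • Γ.star v := by
  classical
  calc Γ.coboundary w = ∑ v, w v • Γ.star v := by
        rw [LinearMap.pi_apply_eq_sum_univ]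
        refine Finset.sum_congr rfl fun v _ => ?_
        congr 2
        ext x
        rw [Pi.single_apply]
        exact if_congr eq_comm rfl rfl
    _ = ∑ v ∈ Γ.nonisolated, w v • Γ.star v :=
        (Finset.sum_subset (Finset.subset_univ _) fun v _ hv => by
          rw [not_not.mp (mt Γ.mem_nonisolated.mpr hv), smul_zero]).symm

lemma range_coboundary :
    LinearMap.range Γ.coboundary = Submodule.span (ZMod 2) (Γ.star '' Γ.nonisolated) := by
  refine le_antisymm ?_ (Submodule.span_le.mpr ?_)
  · rintro _ ⟨w, rfl⟩
    rw [coboundary_eq_sum]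
    exact Submodule.sum_mem _ fun v hv =>
      Submodule.smul_mem _ _ (Submodule.subset_span (Set.mem_image_of_mem _ hv))
  · rintro _ ⟨v, -, rfl⟩
    exact LinearMap.mem_range_self _ _

lemma sum_star : ∑ v ∈ Γ.nonisolated, Γ.star v = 0 := by
  have h : Γ.coboundary 1 = 0 := funext fun e => by
    rw [coboundary_apply, Pi.one_apply, Pi.one_apply, CharTwo.add_self_eq_zero, Pi.zero_apply]
  simpa only [coboundary_eq_sum, Pi.one_apply, one_smul] using h

lemma card_filter_star_apply_ne_zero_le_two (e : E) :
    (Γ.nonisolated.filter fun v => Γ.star v e ≠ 0).card ≤ 2 := by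
  classical
  refine (Finset.card_le_card ?_).trans (Finset.card_le_two (a := Γ.src e) (b := Γ.tgt e))
  intro v hv
  rw [Finset.mem_filter, star, coboundary_apply, Pi.single_apply, Pi.single_apply] at hv
  rw [Finset.mem_insert, Finset.mem_singleton]
  by_contra! hne
  rw [if_neg hne.1.symm, if_neg hne.2.symm, add_zero] at hv
  exact hv.2 rfl

end Dual

namespace IsDual

variable {Γ : Multigraph V E} {Γ' : Multigraph F E}

lemma finrank_ker_boundary_le [Finite E] (h : Γ.IsDual Γ') :
    Module.finrank (ZMod 2) (LinearMap.ker Γ.boundary) ≤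
      Module.finrank (ZMod 2) (LinearMap.range Γ'.coboundary) := by
  rw [← LinearEquiv.finrank_map_eq (Finsupp.linearEquivFunOnFinite (ZMod 2) (ZMod 2) E)]
  refine Submodule.finrank_mono ?_
  rintro _ ⟨z, hz, rfl⟩
  exact (h z).mp hz

variable [Fintype E] [Fintype F]

/-- Euler's formula, weakened by counting the connected components of `Γ` as one. -/
theorem card_edge_add_two_le [Fintype V] [Nonempty V] (h : Γ.IsDual Γ')
    (hne : Γ'.nonisolated.Nonempty) :
    Fintype.card E + 2 ≤ Fintype.card V + Γ'.nonisolated.card := by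
  have hcycles := Γ.card_edge_lt_finrank_ker_boundary_add
  have hdual := h.finrank_ker_boundary_le
  have hcuts := finrank_span_image_lt_card_of_sum_eq_zero (R := ZMod 2) hne Γ'.sum_star
  rw [← range_coboundary] at hcuts
  lia

lemma card_edge_add_one_le [Fintype V] [Nonempty V] (h : Γ.IsDual Γ')
    (hempty : Γ'.nonisolated = ∅) : Fintype.card E + 1 ≤ Fintype.card V := by
  have hcycles := Γ.card_edge_lt_finrank_ker_boundary_add
  have hdual := h.finrank_ker_boundary_le
  rw [range_coboundary, hempty, Finset.coe_empty, Set.image_empty, Submodule.span_empty,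
    finrank_bot] at hdual
  lia

/-- The star of a vertex of the dual is a cycle, the boundary of a face. -/
lemma mul_card_nonisolated_le (h : Γ.IsDual Γ') {g : ℕ}
    (hgirth : ∀ z, Γ.boundary z = 0 → z ≠ 0 → g ≤ z.support.card) :
    g * Γ'.nonisolated.card ≤ 2 * Fintype.card E := by
  have hstar {v : F} (hv : v ∈ Γ'.nonisolated) :
      g ≤ (Finset.univ.filter fun e => Γ'.star v e ≠ 0).card := by
    let z := (Finsupp.linearEquivFunOnFinite (ZMod 2) (ZMod 2) E).symm (Γ'.star v)
    have hz : z.support = Finset.univ.filter fun e => Γ'.star v e ≠ 0 := by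
      ext e
      rw [Finsupp.mem_support_iff, Finset.mem_filter_univ]
      rfl
    rw [← hz]
    refine hgirth z ((h z).mpr ⟨_, rfl⟩) ?_
    rw [Ne, LinearEquiv.map_eq_zero_iff]
    exact Γ'.mem_nonisolated.mp hv
  calc g * Γ'.nonisolated.card
      ≤ ∑ v ∈ Γ'.nonisolated, (Finset.univ.filter fun e => Γ'.star v e ≠ 0).card := by
        rw [mul_comm, ← smul_eq_mul]
        exact Finset.card_nsmul_le_sum _ _ _ fun v => hstar
    _ = ∑ e : E, (Γ'.nonisolated.filter fun v => Γ'.star v e ≠ 0).card := by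
        simp only [Finset.card_filter]
        exact Finset.sum_comm
    _ ≤ ∑ _e : E, 2 := Finset.sum_le_sum fun e _ => Γ'.card_filter_star_apply_ne_zero_le_two e
    _ = 2 * Fintype.card E := by
        rw [Finset.sum_const, Finset.card_univ, smul_eq_mul, mul_comm]

end IsDual

lemma boundary_apply_eq_zero {Γ : Multigraph V E} {z : E →₀ ZMod 2} {v : V}
    (h : ∀ e ∈ z.support, v ∉ Γ.ends e) : Γ.boundary z v = 0 := by
  classical
  have hzero {g : E → V} (hg : ∀ e, g e ∈ Γ.ends e) : z.mapDomain g v = 0 :=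
    Finsupp.notMem_support_iff.mp fun hv => by
      obtain ⟨e, he, rfl⟩ := Finset.mem_image.mp (Finsupp.mapDomain_support hv)
      exact h e he (hg e)
  rw [boundary_apply, Finsupp.add_apply, hzero fun e => Sym2.mem_mk_left _ _,
    hzero fun e => Sym2.mem_mk_right _ _, add_zero]

lemma exists_ne_mem_support {Γ : Multigraph V E} {z : E →₀ ZMod 2} (hz : Γ.boundary z = 0)
    {e : E} (he : e ∈ z.support) (hloop : Γ.src e ≠ Γ.tgt e) {v : V} (hv : v ∈ Γ.ends e) :
    ∃ e' ∈ z.support, e' ≠ e ∧ v ∈ Γ.ends e' := by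
  classical
  by_contra! hcon
  have hrest : Γ.boundary (z.erase e) v = 0 := boundary_apply_eq_zero fun e' he' => by
    rw [Finsupp.support_erase, Finset.mem_erase] at he'
    exact hcon e' he'.2 he'.1
  have hzv := DFunLike.congr_fun hz v
  rw [← Finsupp.single_add_erase e z, map_add, Finsupp.add_apply, hrest, boundary_single,
    Finsupp.add_apply, add_zero, Finsupp.zero_apply] at hzv
  refine Finsupp.mem_support_iff.mp he ?_
  rcases Sym2.mem_iff.mp hv with rfl | rfl
  · rwa [Finsupp.single_eq_same, Finsupp.single_eq_of_ne hloop, add_zero] at hzv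
  · rwa [Finsupp.single_eq_same, Finsupp.single_eq_of_ne hloop.symm, zero_add] at hzv

end Multigraph

section TriangleFree

variable {V : Type*} {G : SimpleGraph V} {H : Multigraph V G.edgeSet}

lemma src_ne_tgt_of_ends_eq (hH : H.ends = Subtype.val) (e : G.edgeSet) : H.src e ≠ H.tgt e := by
  intro heq
  refine G.not_isDiag_of_mem_edgeSet e.2 ?_
  rw [← congrFun hH e]
  exact heq

lemma exists_adj_of_boundary_eq_zero (hH : H.ends = Subtype.val) {z : G.edgeSet →₀ ZMod 2}
    (hz : H.boundary z = 0) {u v : V} (huv : s(u, v) ∈ z.support.map (.subtype _)) :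
    ∃ w, w ≠ u ∧ G.Adj v w ∧ s(v, w) ∈ z.support.map (.subtype _) := by
  obtain ⟨e, he, heuv⟩ := Finset.mem_map.mp huv
  have hends (e : G.edgeSet) : H.ends e = e.1 := congrFun hH e
  replace heuv : e.1 = s(u, v) := heuv
  have hve : v ∈ H.ends e := by
    rw [hends, heuv]
    exact Sym2.mem_mk_right u v
  obtain ⟨e', he', hne, hve'⟩ :=
    Multigraph.exists_ne_mem_support hz he (src_ne_tgt_of_ends_eq hH e) hve
  obtain ⟨w, hw⟩ := Sym2.mem_iff_exists.mp hve'
  rw [hends] at hw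
  refine ⟨w, ?_, G.mem_edgeSet.mp (hw ▸ e'.2), Finset.mem_map.mpr ⟨e', he', hw⟩⟩
  rintro rfl
  exact hne (Subtype.ext (hw.trans (Sym2.eq_swap.trans heuv.symm)))

lemma four_le_card_support (hG : G.CliqueFree 3) (hH : H.ends = Subtype.val)
    {z : G.edgeSet →₀ ZMod 2} (hz : H.boundary z = 0) (hne : z ≠ 0) : 4 ≤ z.support.card := by
  classical
  obtain ⟨⟨⟨u, v⟩, huv⟩, he⟩ := Finsupp.support_nonempty_iff.mpr hne
  replace he : s(u, v) ∈ z.support.map (.subtype _) := Finset.mem_map_of_mem _ he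
  replace huv : G.Adj u v := huv
  obtain ⟨w, hwu, hvw, hevw⟩ := exists_adj_of_boundary_eq_zero hH hz he
  obtain ⟨x, hxv, hux, heux⟩ := exists_adj_of_boundary_eq_zero hH hz (Sym2.eq_swap ▸ he)
  obtain ⟨y, hyv, hwy, hewy⟩ := exists_adj_of_boundary_eq_zero hH hz hevw
  have hcard : ({s(u, v), s(v, w), s(u, x), s(w, y)} : Finset (Sym2 V)).card = 4 := by
    have hxw : x ≠ w := by
      rintro rfl
      exact hG _ (is3Clique_triple_iff.mpr ⟨huv, hux, hvw⟩)
    have hvwne := hvw.ne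
    rw [Finset.card_insert_of_notMem, Finset.card_insert_of_notMem, Finset.card_pair] <;>
      simp only [Finset.mem_insert, Finset.mem_singleton, Sym2.eq_iff, ne_eq] <;> grind
  rw [← Finset.card_map (.subtype _), ← hcard]
  refine Finset.card_le_card ?_
  simp only [Finset.insert_subset_iff, Finset.singleton_subset_iff]
  exact ⟨he, hevw, heux, hewy⟩

end TriangleFree

theorem IsPlanar.card_edgeFinset_add_four_le {V : Type*} [Fintype V] {G : SimpleGraph V}
    [Fintype G.edgeSet] (h : IsPlanar G) (hG : G.CliqueFree 3) (hV : 3 ≤ Fintype.card V) :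
    G.edgeFinset.card + 4 ≤ 2 * Fintype.card V := by
  have : Nonempty V := Fintype.card_pos_iff.mp (by lia)
  obtain ⟨H, f, γ, hdraw, hH⟩ := h.exists_isDrawing
  obtain ⟨F', H', hdual'⟩ := hdraw.exists_isDual
  obtain ⟨F, hF, H'', hdual⟩ := hdual'.exists_finite
  have := hF.fintype
  rw [SimpleGraph.edgeFinset_card]
  rcases H''.nonisolated.eq_empty_or_nonempty with hempty | hne
  · have := hdual.card_edge_add_one_le hempty
    lia
  · have heuler := hdual.card_edge_add_two_le hne
    have hgirth := hdual.mul_card_nonisolated_le fun z => four_le_card_support hG hH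
    lia

/-! ### Book embeddings -/

lemma IsDrawing.isPlanar {V : Type*} {G : SimpleGraph V} {H : Multigraph V G.edgeSet}
    {f : V → ℝ × ℝ} {γ : G.edgeSet → unitInterval → ℝ × ℝ} (h : IsDrawing H f γ)
    (hH : H.ends = Subtype.val) : IsPlanar G :=
  ⟨f, γ, h.injective, h.continuous_arc,
    fun e => ⟨H.src e, H.tgt e, (congrFun hH e).symm, h.arc_zero e, h.arc_one e⟩, h.injective_arc,
    fun _ _ h0 h1 _ hv => (h.eq_zero_or_one hv).elim (fun ht => h0 (congrArg Subtype.val ht))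
      fun ht => h1 (congrArg Subtype.val ht),
    fun _ _ hne _ _ => h.mem_range hne⟩

lemma IsPlanar.of_isContained {V W : Type*} {G : SimpleGraph V} {G' : SimpleGraph W}
    (h : G ⊑ G') (hG' : IsPlanar G') : IsPlanar G := by
  obtain ⟨φ⟩ := h
  obtain ⟨f, γ, hf, hcont, hends, hinj, havoid, hmeet⟩ := hG'
  have hends' (e : G.edgeSet) : ∃ u v : V, (e : Sym2 V) = s(u, v) ∧
      γ (φ.mapEdgeSet e) ⟨0, by norm_num⟩ = f (φ u) ∧
        γ (φ.mapEdgeSet e) ⟨1, by norm_num⟩ = f (φ v) := by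
    obtain ⟨u', v', he, h0, h1⟩ := hends (φ.mapEdgeSet e)
    obtain ⟨⟨u, v⟩, huv⟩ := e
    rcases Sym2.eq_iff.mp he with ⟨rfl, rfl⟩ | ⟨rfl, rfl⟩
    exacts [⟨u, v, rfl, h0, h1⟩, ⟨v, u, Sym2.eq_swap, h0, h1⟩]
  refine ⟨f ∘ φ, γ ∘ φ.mapEdgeSet, hf.comp φ.injective, fun e => hcont _, hends',
    fun e => hinj _, fun e t h0 h1 v => havoid _ t h0 h1 _, fun e e' hne s t hst => ?_⟩
  obtain ⟨u, v, -, h0, h1⟩ := hends' e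
  have hs : (s : ℝ) = 0 ∨ (s : ℝ) = 1 := by
    by_contra! hs
    obtain ⟨w, hw⟩ := hmeet _ _ (φ.mapEdgeSet.injective.ne hne) s t hst
    exact havoid _ s hs.1 hs.2 w hw.symm
  rcases hs with hs | hs
  · exact ⟨u, h0.symm.trans (congrArg _ (Subtype.ext hs.symm))⟩
  · exact ⟨v, h1.symm.trans (congrArg _ (Subtype.ext hs.symm))⟩

section Arch

variable {a b c d s t : ℝ} {σ τ : ℤˣ}

/-- The parabolic arc over the interval from `a` to `b`, above the axis for `σ = 1` and below it
for `σ = -1`. -/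
def arch (σ : ℤˣ) (a b t : ℝ) : ℝ × ℝ :=
  (a + t * (b - a), σ * (t * (b - a) * ((1 - t) * (b - a))))

lemma arch_injective (hab : a < b) : (arch σ a b).Injective := fun _ _ h =>
  mul_right_cancel₀ (sub_ne_zero.mpr hab.ne') (add_left_cancel (congrArg Prod.fst h))

lemma eq_zero_or_one_of_arch_snd_eq_zero (hab : a < b) (h : (arch σ a b t).2 = 0) :
    t = 0 ∨ t = 1 := by
  have hσ : ((σ : ℤ) : ℝ) ≠ 0 := Int.cast_ne_zero.mpr σ.ne_zero
  simpa [arch, hσ, sub_ne_zero.mpr hab.ne', sub_eq_zero, eq_comm (a := (1 : ℝ))] using h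

lemma mul_sub_eq_zero_of_nested {X : ℝ} (hac : a ≤ c) (hcX : c ≤ X) (hXd : X ≤ d) (hdb : d ≤ b)
    (hne : ¬(a = c ∧ b = d)) (h : (X - a) * (b - X) = (X - c) * (d - X)) :
    (X - a) * (b - X) = 0 := by
  have hsum : (c - a) * (b - X) + (X - c) * (b - d) = 0 := by linarith
  have hleft : (c - a) * (b - X) = 0 := by
    linarith [hsum, mul_nonneg (sub_nonneg.mpr hac) (sub_nonneg.mpr (hXd.trans hdb)),
      mul_nonneg (sub_nonneg.mpr hcX) (sub_nonneg.mpr hdb)]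
  have hright : (X - c) * (b - d) = 0 := by rwa [hleft, zero_add] at hsum
  rcases mul_eq_zero.mp hleft with hca | hbX
  · rcases mul_eq_zero.mp hright with hXc | hbd
    · rw [h, hXc, zero_mul]
    · exact absurd ⟨(sub_eq_zero.mp hca).symm, sub_eq_zero.mp hbd⟩ hne
  · rw [hbX, mul_zero]

lemma mul_sub_eq_zero_of_not_crossing {X : ℝ} (haX : a ≤ X) (hXb : X ≤ b) (hcX : c ≤ X)
    (hXd : X ≤ d) (hne : ¬(a = c ∧ b = d)) (hcross : ¬(a < c ∧ c < b ∧ b < d))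
    (hcross' : ¬(c < a ∧ a < d ∧ d < b)) (h : (X - a) * (b - X) = (X - c) * (d - X)) :
    (X - a) * (b - X) = 0 := by
  by_cases hin : a ≤ c ∧ d ≤ b
  · exact mul_sub_eq_zero_of_nested hin.1 hcX hXd hin.2 hne h
  by_cases hout : c ≤ a ∧ b ≤ d
  · exact h.trans (mul_sub_eq_zero_of_nested hout.1 haX hXb hout.2
      (fun hne' => hne ⟨hne'.1.symm, hne'.2.symm⟩) h.symm)
  have hX : X = a ∨ X = b := by grind
  rcases hX with rfl | rfl
  · rw [sub_self, zero_mul]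
  · rw [sub_self, mul_zero]

lemma arch_snd_eq_zero_of_arch_eq (hab : a < b) (hcd : c < d) (hs : s ∈ Set.Icc 0 1)
    (ht : t ∈ Set.Icc 0 1) (hne : ¬(a = c ∧ b = d))
    (hcross : σ = τ → ¬(a < c ∧ c < b ∧ b < d) ∧ ¬(c < a ∧ a < d ∧ d < b))
    (h : arch σ a b s = arch τ c d t) : (arch σ a b s).2 = 0 := by
  obtain ⟨hX, hY⟩ := Prod.ext_iff.mp h
  simp only [arch] at hX hY ⊢
  have haX : 0 ≤ s * (b - a) := mul_nonneg hs.1 (sub_nonneg.mpr hab.le)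
  have hXb : 0 ≤ (1 - s) * (b - a) := mul_nonneg (sub_nonneg.mpr hs.2) (sub_nonneg.mpr hab.le)
  have hcX : 0 ≤ t * (d - c) := mul_nonneg ht.1 (sub_nonneg.mpr hcd.le)
  have hXd : 0 ≤ (1 - t) * (d - c) := mul_nonneg (sub_nonneg.mpr ht.2) (sub_nonneg.mpr hcd.le)
  suffices hheight : s * (b - a) * ((1 - s) * (b - a)) = 0 by rw [hheight, mul_zero]
  rcases eq_or_ne σ τ with rfl | hσ
  · have hY' := mul_left_cancel₀ (Int.cast_ne_zero.mpr σ.ne_zero) hY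
    have hzero := mul_sub_eq_zero_of_not_crossing (X := a + s * (b - a)) (by linarith)
      (by linarith) (by linarith) (by linarith) hne (hcross rfl).1 (hcross rfl).2
      (by linear_combination hY' + (a + s * (b - a) + t * (d - c) - d) * hX)
    linear_combination hzero
  · have hneg : ((σ : ℤ) : ℝ) = -((τ : ℤ) : ℝ) := by
      rw [Int.units_ne_iff_eq_neg.mp hσ, Units.val_neg, Int.cast_neg]
    rw [hneg, neg_mul, ← mul_neg] at hY
    have hY' := mul_left_cancel₀ (Int.cast_ne_zero.mpr τ.ne_zero) hY
    linarith [mul_nonneg haX hXb, mul_nonneg hcX hXd]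

end Arch

/-- A two-page book embedding of a multigraph: the vertices lie on the real axis, at `x v`, and
the edge `e` runs from left to right on the page `σ e`. Edges on the same page do not cross. -/
structure IsBookEmbedding {V E : Type*} (H : Multigraph V E) (x : V → ℝ) (σ : E → ℤˣ) : Prop where
  injective : x.Injective
  lt : ∀ e, x (H.src e) < x (H.tgt e)
  eq_of_ends_eq : ∀ {e e'}, H.src e = H.src e' → H.tgt e = H.tgt e' → e = e'
  not_crossing : ∀ {e e'}, σ e = σ e' →
    ¬(x (H.src e) < x (H.src e') ∧ x (H.src e') < x (H.tgt e) ∧ x (H.tgt e) < x (H.tgt e'))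

theorem IsBookEmbedding.isDrawing {V E : Type*} {H : Multigraph V E} {x : V → ℝ} {σ : E → ℤˣ}
    (h : IsBookEmbedding H x σ) :
    IsDrawing H (fun v => (x v, 0)) fun e t => arch (σ e) (x (H.src e)) (x (H.tgt e)) t where
  injective u v huv := h.injective (congrArg Prod.fst huv)
  continuous_arc e := by
    unfold arch
    fun_prop
  injective_arc e := (arch_injective (h.lt e)).comp Subtype.val_injective
  arc_zero e := by simp [arch]
  arc_one e := by simp [arch]
  eq_zero_or_one {e t v} htv :=
    (eq_zero_or_one_of_arch_snd_eq_zero (h.lt e) (congrArg Prod.snd htv)).imp Subtype.ext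
      Subtype.ext
  mem_range {e e' s t} hne hst := by
    have hzero : (arch (σ e) (x (H.src e)) (x (H.tgt e)) s).2 = 0 :=
      arch_snd_eq_zero_of_arch_eq (h.lt e) (h.lt e') s.2 t.2
        (fun heq => hne (h.eq_of_ends_eq (h.injective heq.1) (h.injective heq.2)))
        (fun hσ => ⟨h.not_crossing hσ, h.not_crossing hσ.symm⟩) hst
    rcases eq_zero_or_one_of_arch_snd_eq_zero (h.lt e) hzero with hs | hs
    · exact ⟨H.src e, by simp [arch, hs]⟩
    · exact ⟨H.tgt e, by simp [arch, hs]⟩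

/-- Vertices placed along a line by `pos` can be joined, on one page, by all the edges in `R`
without any two of them crossing. -/
def NonCrossing {V P : Type*} [LT P] (pos : V → P) (R : V → V → Prop) : Prop :=
  ∀ ⦃a b c d⦄, pos a < pos c → pos c < pos b → pos b < pos d → R a b → ¬R c d

theorem isPlanar_of_nonCrossing {V P : Type*} [LinearOrder P] [Countable P] {G : SimpleGraph V}
    {pos : V → P} (hpos : pos.Injective) {T B : V → V → Prop} (hT : NonCrossing pos T)
    (hB : NonCrossing pos B)
    (hTB : ∀ u v, G.Adj u v → pos u < pos v → T u v ∨ B u v) : IsPlanar G := by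
  classical
  obtain ⟨x⟩ : Nonempty (P ↪o ℝ) := Order.embedding_from_countable_to_dense P ℝ
  have horient (e : G.edgeSet) : ∃ u v, s(u, v) = e.1 ∧ pos u < pos v := by
    obtain ⟨⟨u, v⟩, huv⟩ := e
    rcases lt_or_gt_of_ne (hpos.ne (G.ne_of_adj huv)) with hlt | hlt
    exacts [⟨u, v, rfl, hlt⟩, ⟨v, u, Sym2.eq_swap, hlt⟩]
  choose src tgt hends hlt using horient
  let H : Multigraph V G.edgeSet := ⟨src, tgt⟩
  have hpage (e : G.edgeSet) : T (src e) (tgt e) ∨ B (src e) (tgt e) :=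
    hTB _ _ (G.mem_edgeSet.mp (hends e ▸ e.2)) (hlt e)
  have hbook : IsBookEmbedding H (x ∘ pos) fun e => if T (src e) (tgt e) then 1 else -1 :=
    { injective := x.injective.comp hpos
      lt := fun e => x.lt_iff_lt.mpr (hlt e)
      eq_of_ends_eq := fun {e e'} hs ht =>
        Subtype.ext ((hends e).symm.trans ((congrArg₂ Sym2.mk hs ht).trans (hends e')))
      not_crossing := fun {e e'} hσ ⟨h₁, h₂, h₃⟩ => by
        replace h₁ := x.lt_iff_lt.mp h₁
        replace h₂ := x.lt_iff_lt.mp h₂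
        replace h₃ := x.lt_iff_lt.mp h₃
        by_cases hTe : T (src e) (tgt e)
        · have hTe' : T (src e') (tgt e') := by
            by_contra hTe'
            simp [hTe, hTe'] at hσ
          exact hT h₁ h₂ h₃ hTe hTe'
        · have hTe' : ¬T (src e') (tgt e') := fun hTe' => by simp [hTe, hTe'] at hσ
          exact hB h₁ h₂ h₃ ((hpage e).resolve_left hTe) ((hpage e').resolve_left hTe') }
  exact hbook.isDrawing.isPlanar (funext hends)

/-! ### Layers of the complete tripartite graph -/

/-- A page given as a table of pairs `(a, b)` of slots: each vertex in slot `a` is joined with each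
vertex in slot `b`. Slots outside `wide` hold at most one vertex, so edges meeting there share an
end. -/
def IsNonCrossingTable (wide : List ℕ) (table : List (ℕ × ℕ)) : Prop :=
  ∀ e ∈ table, ∀ e' ∈ table, e.1 ≤ e'.1 → e'.1 ≤ e.2 → e.2 ≤ e'.2 →
    e.1 = e'.1 ∧ e.1 ∉ wide ∨ e'.1 = e.2 ∧ e.2 ∉ wide ∨ e.2 = e'.2 ∧ e.2 ∉ wide

instance (wide : List ℕ) (table : List (ℕ × ℕ)) : Decidable (IsNonCrossingTable wide table) :=
  inferInstanceAs (Decidable (∀ e ∈ table, ∀ e' ∈ table, _))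

/-- A layout of the vertices for a two-page book. The line is divided into slots, and each slot is
ordered by rank; all slots but those in `wide` hold at most one vertex. The two pages join the
slots listed in the tables `top` and `bottom`. -/
structure BookLayout (V : Type*) where
  slot : V → ℕ
  rank : V → ℕ
  wide : List ℕ
  eq_of_slot_eq : ∀ {u v}, slot u = slot v → slot u ∉ wide ∨ rank u = rank v → u = v
  top : List (ℕ × ℕ)
  bottom : List (ℕ × ℕ)
  lt_of_mem : ∀ e ∈ top ++ bottom, e.1 < e.2
  top_nonCrossing : IsNonCrossingTable wide top
  bottom_nonCrossing : IsNonCrossingTable wide bottom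

namespace BookLayout

variable {V : Type*} (L : BookLayout V) {u v : V}

/-- The position of a vertex on the line. -/
def pos (v : V) : ℕ ×ₗ ℕ := toLex (L.slot v, L.rank v)

lemma pos_injective : L.pos.Injective := fun _ _ h => by
  obtain ⟨hslot, hrank⟩ := Prod.ext_iff.mp (toLex_inj.mp h)
  exact L.eq_of_slot_eq hslot (.inr hrank)

lemma slot_mono (h : L.pos u < L.pos v) : L.slot u ≤ L.slot v :=
  (Prod.Lex.toLex_lt_toLex.mp h).elim le_of_lt fun h => h.1.le

/-- The edges of the page given by a table, together with the edges between vertices that are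
consecutive in their slot, which can be added to any page. -/
def page (table : List (ℕ × ℕ)) (u v : V) : Prop :=
  (L.slot u, L.slot v) ∈ table ∨ L.slot u = L.slot v ∧ L.rank v = L.rank u + 1

lemma not_pos_lt_of_consecutive {w : V} (hslot : L.slot u = L.slot v)
    (hrank : L.rank v = L.rank u + 1) (huw : L.pos u < L.pos w) : ¬L.pos w < L.pos v := by
  intro hwv
  have huw' := Prod.Lex.toLex_lt_toLex.mp huw
  have hwv' := Prod.Lex.toLex_lt_toLex.mp hwv
  lia

lemma page_nonCrossing {table : List (ℕ × ℕ)} (h : IsNonCrossingTable L.wide table) :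
    NonCrossing L.pos (L.page table) := by
  rintro a b c d hac hcb hbd (hab | ⟨hslot, hrank⟩) (hcd | ⟨hslot', hrank'⟩)
  · rcases h _ hab _ hcd (L.slot_mono hac) (L.slot_mono hcb) (L.slot_mono hbd) with
      ⟨heq, hw⟩ | ⟨heq, hw⟩ | ⟨heq, hw⟩
    · exact hac.ne (congrArg _ (L.eq_of_slot_eq heq (.inl hw)))
    · exact hcb.ne (congrArg _ (L.eq_of_slot_eq heq (.inl fun hc => hw (heq ▸ hc))))
    · exact hbd.ne (congrArg _ (L.eq_of_slot_eq heq (.inl hw)))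
  · exact L.not_pos_lt_of_consecutive hslot' hrank' hcb hbd
  all_goals exact L.not_pos_lt_of_consecutive hslot hrank hac hcb

lemma pos_lt_of_page (h : L.page L.top u v ∨ L.page L.bottom u v) : L.pos u < L.pos v := by
  refine Prod.Lex.toLex_lt_toLex.mpr ?_
  rcases h with (h | h) | (h | h)
  · exact .inl (L.lt_of_mem _ (List.mem_append_left _ h))
  · exact .inr ⟨h.1, h.2 ▸ Nat.lt_succ_self _⟩
  · exact .inl (L.lt_of_mem _ (List.mem_append_right _ h))
  · exact .inr ⟨h.1, h.2 ▸ Nat.lt_succ_self _⟩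

/-- The graph drawn on the two pages. -/
def graph : SimpleGraph V :=
  .fromRel fun u v => L.page L.top u v ∨ L.page L.bottom u v

lemma graph_isPlanar : IsPlanar L.graph :=
  have : Countable (ℕ ×ₗ ℕ) := inferInstanceAs (Countable (ℕ × ℕ))
  isPlanar_of_nonCrossing L.pos_injective (L.page_nonCrossing L.top_nonCrossing)
    (L.page_nonCrossing L.bottom_nonCrossing) fun _ _ h hlt =>
      ((fromRel_adj _ _ _).mp h).2.resolve_right fun h' => hlt.not_gt (L.pos_lt_of_page h')

lemma adj_of_page (h : L.page L.top u v ∨ L.page L.bottom u v) : L.graph.Adj u v :=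
  (fromRel_adj _ _ _).mpr ⟨fun huv => (L.pos_lt_of_page h).ne (congrArg _ huv), .inl h⟩

lemma adj_of_mem (h : (L.slot u, L.slot v) ∈ L.top ++ L.bottom ∨
    (L.slot v, L.slot u) ∈ L.top ++ L.bottom) : L.graph.Adj u v := by
  rcases h with h | h
  · exact L.adj_of_page ((List.mem_append.mp h).imp .inl .inl)
  · exact (L.adj_of_page ((List.mem_append.mp h).imp .inl .inl)).symm

lemma adj_of_consecutive (hslot : L.slot u = L.slot v)
    (hrank : L.rank v = L.rank u + 1) : L.graph.Adj u v :=
  L.adj_of_page (.inl (.inr ⟨hslot, hrank⟩))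

end BookLayout

/-- The vertices of the complete tripartite graph with one part `{apex}` and two infinite parts. -/
inductive TripartiteVertex
  | apex
  | left (j : ℕ)
  | right (j : ℕ)

namespace TripartiteVertex

/-- The order of the vertices within the slots of both kinds of layers. -/
def rank : TripartiteVertex → ℕ
  | apex => 0
  | left j => j
  | right j => j + 1

/-- The slots of the layer of block `r`, the block being formed by the vertices of index
`4 * r, …, 4 * r + 3`. The other vertices of each side are grouped by the parity of the index. The
vertices of `right` of index `4 * r + 4` and `4 * r + 5` come last in their groups, next to
`left (4 * r + 3)` and `left (4 * r + 2)`, where they can be reached from `apex`. -/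
def blockSlot (r : ℕ) : TripartiteVertex → ℕ
  | apex => 14
  | left j =>
    if j = 4 * r then 0
    else if j = 4 * r + 1 then 7
    else if j = 4 * r + 2 then 4
    else if j = 4 * r + 3 then 11
    else if j % 2 = 0 then 12 else 5
  | right j =>
    if j = 4 * r then 8
    else if j = 4 * r + 1 then 1
    else if j = 4 * r + 2 then 13
    else if j = 4 * r + 3 then 6
    else if j = 4 * r + 4 then 10
    else if j = 4 * r + 5 then 3
    else if j % 2 = 0 then 9 else 2

/-- The layer of block `r`. Besides edges within the block and at `apex`, it joins the vertices of
`left` in the block to the vertices of `right` of the other parity in all other blocks, and those of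
`right` in the block to the vertices of `left` of the same parity. It may have edges between
vertices of the same part, which are discarded later. -/
def blockLayout (r : ℕ) : BookLayout TripartiteVertex where
  slot := blockSlot r
  rank := rank
  wide := [2, 5, 9, 12]
  eq_of_slot_eq {u v} h h' := by
    cases u <;> cases v <;> grind (splits := 40) [blockSlot, rank]
  top := [(0, 1), (0, 2), (0, 3), (4, 6), (5, 6), (6, 7), (7, 8), (7, 9), (7, 10), (11, 13),
    (12, 13), (0, 14), (3, 14), (4, 14), (6, 14), (7, 14), (10, 14), (11, 14), (13, 14)]
  bottom := [(1, 4), (2, 4), (3, 4), (1, 5), (0, 6), (8, 11), (9, 11), (10, 11), (8, 12), (7, 13),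
    (0, 13)]
  lt_of_mem := by decide
  top_nonCrossing := by decide
  bottom_nonCrossing := by decide

lemma blockLayout_left_adj_right {r i j : ℕ}
    (h : (i / 4 = r ∧ j / 4 = r ∧ i ≠ j ∧ ¬(i % 4 = 2 ∧ j % 4 = 0) ∧ ¬(i % 4 = 3 ∧ j % 4 = 1)) ∨
      (i / 4 ≠ r ∧ j / 4 = r ∧ i % 2 = j % 2) ∨ (i / 4 = r ∧ j / 4 ≠ r ∧ i % 2 ≠ j % 2)) :
    (blockLayout r).graph.Adj (left i) (right j) := by
  refine (blockLayout r).adj_of_mem ?_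
  simp only [blockLayout, blockSlot]
  split_ifs <;> first | omega | decide

lemma blockLayout_apex_adj_left {r j : ℕ} (h : j / 4 = r) :
    (blockLayout r).graph.Adj apex (left j) := by
  refine (blockLayout r).adj_of_mem ?_
  simp only [blockLayout, blockSlot]
  split_ifs <;> first | omega | decide

lemma blockLayout_apex_adj_right {r j : ℕ}
    (h : (j / 4 = r ∧ 2 ≤ j % 4) ∨ (j / 4 = r + 1 ∧ j % 4 < 2)) :
    (blockLayout r).graph.Adj apex (right j) := by
  refine (blockLayout r).adj_of_mem ?_
  simp only [blockLayout, blockSlot]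
  split_ifs <;> first | omega | decide

/-- The slots of the last layer, in which vertices of index at least `4`, of both sides, are
grouped by the parity of the index. The tests for the indices `4 * k` and `4 * k + 1` come first so
that `k = 0` is not special. -/
def lastSlot (k : ℕ) : TripartiteVertex → ℕ
  | apex => 14
  | left j =>
    if j = 4 * k then 13
    else if j = 4 * k + 1 then 6
    else if j = 0 then 1
    else if j = 1 then 8
    else if j = 2 then 3
    else if j = 3 then 10
    else if j % 2 = 0 then 5 else 12
  | right j =>
    if j = 4 * k then 0
    else if j = 4 * k + 1 then 7
    else if j = 0 then 2
    else if j = 1 then 9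
    else if j = 2 then 4
    else if j = 3 then 11
    else if j % 2 = 0 then 5 else 12

/-- The last layer. It contains the edges `left j`–`right j` and `right j`–`left (j + 2)` that the
layer of each block leaves out, and all edges needed at the vertices of index `4 * k` and
`4 * k + 1`, which lie in no block. As in `blockLayout`, some of its edges are discarded later. -/
def lastLayout (k : ℕ) : BookLayout TripartiteVertex where
  slot := lastSlot k
  rank := rank
  wide := [5, 12]
  eq_of_slot_eq {u v} h h' := by
    cases u <;> cases v <;> grind (splits := 40) [lastSlot, rank]
  top := [(0, 1), (0, 3), (0, 5), (0, 6), (0, 13), (1, 2), (2, 3), (3, 4), (6, 7), (7, 8), (7, 10),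
    (7, 12), (7, 13), (8, 9), (9, 10), (10, 11)]
  bottom := [(2, 6), (4, 6), (5, 6), (9, 13), (11, 13), (12, 13), (0, 14), (2, 14), (6, 14),
    (7, 14), (9, 14), (13, 14)]
  lt_of_mem := by decide
  top_nonCrossing := by decide
  bottom_nonCrossing := by decide

lemma lastLayout_left_adj_right_of_lt_four {k i j : ℕ} (hk : 0 < k) (hi : i < 4) (hj : j < 4)
    (h : i = j ∨ i = 2 ∧ j = 0 ∨ i = 3 ∧ j = 1) :
    (lastLayout k).graph.Adj (left i) (right j) := by
  refine (lastLayout k).adj_of_mem ?_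
  simp only [lastLayout, lastSlot]
  obtain ⟨rfl, rfl⟩ | ⟨rfl, rfl⟩ | ⟨rfl, rfl⟩ | ⟨rfl, rfl⟩ | ⟨rfl, rfl⟩ | ⟨rfl, rfl⟩ :
      i = 0 ∧ j = 0 ∨ i = 1 ∧ j = 1 ∨ i = 2 ∧ j = 2 ∨ i = 3 ∧ j = 3 ∨ i = 2 ∧ j = 0 ∨
        i = 3 ∧ j = 1 := by omega
  all_goals split_ifs <;> first | contradiction | (exfalso; omega) | decide

lemma lastLayout_left_adj_right_of_four_le {k i j : ℕ} (hi : 4 ≤ i) (hj : 4 ≤ j) (hi' : i < 4 * k)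
    (hj' : j < 4 * k) (h : j = i ∨ i = j + 2) : (lastLayout k).graph.Adj (left i) (right j) := by
  have hslot : (lastLayout k).slot (left i) = (lastLayout k).slot (right j) := by
    trans if i % 2 = 0 then 5 else 12 <;> simp only [lastLayout, lastSlot] <;> split_ifs <;> omega
  rcases h with h | h
  · exact (lastLayout k).adj_of_consecutive hslot (congrArg (· + 1) h)
  · exact ((lastLayout k).adj_of_consecutive hslot.symm h).symm

lemma lastLayout_left_adj_right_of_div_eq {k i j : ℕ} (hi : i < 4 * k) (hij : i / 4 = j / 4)
    (h : i = j ∨ (i % 4 = 2 ∧ j % 4 = 0) ∨ (i % 4 = 3 ∧ j % 4 = 1)) :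
    (lastLayout k).graph.Adj (left i) (right j) := by
  by_cases hi' : i < 4
  · exact lastLayout_left_adj_right_of_lt_four (by omega) hi' (by omega) (by omega)
  · exact lastLayout_left_adj_right_of_four_le (by omega) (by omega) hi (by omega) (by omega)

lemma lastLayout_left_adj_right_of_lt_of_le {k i j : ℕ} (hi : i < 4 * k) (hj : 4 * k ≤ j)
    (hj' : j < 4 * k + 2) (h : i % 2 = j % 2) : (lastLayout k).graph.Adj (left i) (right j) := by
  refine (lastLayout k).adj_of_mem ?_
  simp only [lastLayout, lastSlot]
  obtain rfl | rfl : j = 4 * k ∨ j = 4 * k + 1 := by omega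
  all_goals
    simp only [hi.ne, reduceIte, Nat.succ_ne_self]
    split_ifs <;> first | omega | decide

lemma lastLayout_left_adj_right_of_le_of_lt {k i j : ℕ} (hi : 4 * k ≤ i) (hi' : i < 4 * k + 2)
    (hj : j < 4 * k) (h : i % 2 ≠ j % 2) : (lastLayout k).graph.Adj (left i) (right j) := by
  refine (lastLayout k).adj_of_mem ?_
  simp only [lastLayout, lastSlot]
  obtain rfl | rfl : i = 4 * k ∨ i = 4 * k + 1 := by omega
  all_goals
    simp only [hj.ne, reduceIte, Nat.succ_ne_self]
    split_ifs <;> first | omega | decide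

lemma lastLayout_left_adj_right_of_le_of_le {k i j : ℕ} (hi : 4 * k ≤ i) (hi' : i < 4 * k + 2)
    (hj : 4 * k ≤ j) (hj' : j < 4 * k + 2) : (lastLayout k).graph.Adj (left i) (right j) := by
  refine (lastLayout k).adj_of_mem ?_
  simp only [lastLayout, lastSlot]
  obtain rfl | rfl : i = 4 * k ∨ i = 4 * k + 1 := by omega
  all_goals
    obtain rfl | rfl : j = 4 * k ∨ j = 4 * k + 1 := by omega
    all_goals
      simp only [reduceIte, Nat.succ_ne_self]
      decide

lemma lastLayout_apex_adj_left {k j : ℕ} (hj : 4 * k ≤ j) (hj' : j < 4 * k + 2) :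
    (lastLayout k).graph.Adj apex (left j) := by
  refine (lastLayout k).adj_of_mem ?_
  simp only [lastLayout, lastSlot]
  obtain rfl | rfl : j = 4 * k ∨ j = 4 * k + 1 := by omega
  all_goals
    simp only [reduceIte, Nat.succ_ne_self]
    decide

lemma lastLayout_apex_adj_right {k j : ℕ} (h : j < 2) :
    (lastLayout k).graph.Adj apex (right j) := by
  refine (lastLayout k).adj_of_mem ?_
  simp only [lastLayout, lastSlot]
  split_ifs <;> first | omega | decide

end TripartiteVertex

/-! ### Planar decompositions -/

/-- `G` is the union of `m` planar subgraphs, so that `thickness G` is the least such `m`. -/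
def HasPlanarDecomposition {V : Type*} (G : SimpleGraph V) (m : ℕ) : Prop :=
  ∃ H : Fin m → SimpleGraph V, (∀ i, H i ≤ G) ∧ (∀ i, IsPlanar (H i)) ∧ (⨆ i, H i) = G

section Decomposition

variable {V W : Type*} {G : SimpleGraph V} {G' : SimpleGraph W} {m : ℕ}

lemma hasPlanarDecomposition_of_isContained_iSup {P : Fin m → SimpleGraph W}
    (hP : ∀ i, IsPlanar (P i)) (hG : G ⊑ ⨆ i, P i) : HasPlanarDecomposition G m := by
  obtain ⟨φ⟩ := hG
  refine ⟨fun i => G ⊓ (P i).comap φ, fun i => inf_le_left, fun i => ?_, ?_⟩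
  · exact .of_isContained ⟨⟨⟨φ, fun h => h.2⟩, φ.injective⟩⟩ (hP i)
  · refine le_antisymm (iSup_le fun i => inf_le_left) fun u v huv => ?_
    obtain ⟨i, hi⟩ := iSup_adj.mp (φ.toHom.map_adj huv)
    exact iSup_adj.mpr ⟨i, huv, hi⟩

namespace HasPlanarDecomposition

lemma of_isContained (h : HasPlanarDecomposition G' m) (hG : G ⊑ G') :
    HasPlanarDecomposition G m := by
  obtain ⟨H, -, hH, rfl⟩ := h
  exact hasPlanarDecomposition_of_isContained_iSup hH hG

lemma pos (h : HasPlanarDecomposition G m) (hG : G ≠ ⊥) : 0 < m := by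
  obtain ⟨H, -, -, rfl⟩ := h
  refine Nat.pos_of_ne_zero fun hm => hG ?_
  subst hm
  exact iSup_of_empty H

lemma card_edgeFinset_add_le [Fintype V] [Fintype G.edgeSet] (h : HasPlanarDecomposition G m)
    (hG : G.CliqueFree 3) (hV : 3 ≤ Fintype.card V) :
    G.edgeFinset.card + m * 4 ≤ m * (2 * Fintype.card V) := by
  classical
  obtain ⟨H, hle, hH, hsup⟩ := h
  have hcover : G.edgeFinset ⊆ Finset.univ.biUnion fun i => (H i).edgeFinset := fun e he => by
    have he' : e ∈ (⨆ i, H i).edgeSet := hsup ▸ mem_edgeFinset.mp he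
    rw [edgeSet_iSup] at he'
    simpa using he'
  calc G.edgeFinset.card + m * 4 ≤ (∑ i, (H i).edgeFinset.card) + m * 4 :=
        Nat.add_le_add_right ((Finset.card_le_card hcover).trans Finset.card_biUnion_le) _
    _ = ∑ i, ((H i).edgeFinset.card + 4) := by simp [Finset.sum_add_distrib]
    _ ≤ ∑ _i : Fin m, 2 * Fintype.card V := Finset.sum_le_sum fun i _ =>
        (hH i).card_edgeFinset_add_four_le (hG.anti (hle i)) hV
    _ = m * (2 * Fintype.card V) := by simp

lemma completeBipartiteGraph_card_mul_card_add_le {A B : Type*} [Fintype A] [Fintype B]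
    (h : HasPlanarDecomposition (completeBipartiteGraph A B) m)
    (hAB : 3 ≤ Fintype.card A + Fintype.card B) :
    Fintype.card A * Fintype.card B + m * 4 ≤ m * (2 * (Fintype.card A + Fintype.card B)) := by
  classical
  have hfree : (completeBipartiteGraph A B).CliqueFree 3 :=
    (CompleteBipartiteGraph.bicoloring A B).colorable.cliqueFree (by decide)
  have hcard : (completeBipartiteGraph A B).edgeFinset.card = Fintype.card A * Fintype.card B := by
    have hencard := encard_edgeSet_completeBipartiteGraph (W₁ := A) (W₂ := B)
    rw [← coe_edgeFinset, Set.encard_coe_eq_coe_finsetCard] at hencard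
    simp only [ENat.card_eq_coe_fintype_card] at hencard
    exact_mod_cast hencard
  simpa only [hcard, Fintype.card_sum] using
    h.card_edgeFinset_add_le hfree (by rwa [Fintype.card_sum])

end HasPlanarDecomposition

end Decomposition

lemma completeBipartiteGraph_isContained_completeMultipartiteGraph {ι : Type*} (V : ι → Type*)
    {i j : ι} (hij : i ≠ j) :
    completeBipartiteGraph (V i) (V j) ⊑ completeMultipartiteGraph V :=
  ⟨⟨⟨Sum.elim (Sigma.mk i) (Sigma.mk j), by rintro (a | a) (b | b) <;> simp [hij, hij.symm]⟩, by
    rintro (a | a) (b | b) <;> simp [hij, hij.symm]⟩⟩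

lemma HasPlanarDecomposition.add_two_le_four_mul {m n : ℕ} (hn : 1 ≤ n)
    (h : HasPlanarDecomposition (completeBipartiteGraph (Fin n) (Fin n)) m) : n + 2 ≤ 4 * m := by
  obtain rfl | hn2 := hn.eq_or_lt
  · have : 0 < m := h.pos fun hbot => by
      have : (completeBipartiteGraph (Fin 1) (Fin 1)).Adj (.inl 0) (.inr 0) := by simp
      simp [hbot] at this
    omega
  · have hcount : n * n + m * 4 ≤ m * (2 * (n + n)) := by
      simpa using h.completeBipartiteGraph_card_mul_card_add_le (by simp; omega)
    by_contra! hlt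
    nlinarith

namespace TripartiteVertex

/-- The `k` block layers and the last layer, which together cover all edges between vertices of
index less than `4 * k + 2`. -/
def layer (k : ℕ) : Fin (k + 1) → SimpleGraph TripartiteVertex :=
  Fin.snoc (fun r => (blockLayout r).graph) (lastLayout k).graph

lemma layer_isPlanar {k : ℕ} (r : Fin (k + 1)) : IsPlanar (layer k r) := by
  cases r using Fin.lastCases <;>
    simp only [layer, Fin.snoc_last, Fin.snoc_castSucc, BookLayout.graph_isPlanar]

lemma iSup_layer_adj_of_block {k r : ℕ} (hr : r < k) {u v : TripartiteVertex}
    (h : (blockLayout r).graph.Adj u v) : (⨆ r, layer k r).Adj u v :=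
  iSup_adj.mpr ⟨Fin.castSucc ⟨r, hr⟩, by simpa only [layer, Fin.snoc_castSucc] using h⟩

lemma iSup_layer_adj_of_last {k : ℕ} {u v : TripartiteVertex}
    (h : (lastLayout k).graph.Adj u v) : (⨆ r, layer k r).Adj u v :=
  iSup_adj.mpr ⟨Fin.last k, by simpa only [layer, Fin.snoc_last] using h⟩

lemma iSup_layer_left_adj_right {k i j : ℕ} (hi : i < 4 * k + 2) (hj : j < 4 * k + 2) :
    (⨆ r, layer k r).Adj (left i) (right j) := by
  rcases Nat.lt_or_ge i (4 * k) with hik | hik <;> rcases Nat.lt_or_ge j (4 * k) with hjk | hjk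
  · by_cases hij : i / 4 = j / 4
    · by_cases hmod : i = j ∨ (i % 4 = 2 ∧ j % 4 = 0) ∨ (i % 4 = 3 ∧ j % 4 = 1)
      · exact iSup_layer_adj_of_last (lastLayout_left_adj_right_of_div_eq hik hij hmod)
      · exact iSup_layer_adj_of_block (r := i / 4) (by omega)
          (blockLayout_left_adj_right (by omega))
    · by_cases hmod : i % 2 = j % 2
      · exact iSup_layer_adj_of_block (r := j / 4) (by omega)
          (blockLayout_left_adj_right (by omega))
      · exact iSup_layer_adj_of_block (r := i / 4) (by omega)
          (blockLayout_left_adj_right (by omega))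
  · by_cases hmod : i % 2 = j % 2
    · exact iSup_layer_adj_of_last (lastLayout_left_adj_right_of_lt_of_le hik hjk hj hmod)
    · exact iSup_layer_adj_of_block (r := i / 4) (by omega)
        (blockLayout_left_adj_right (by omega))
  · by_cases hmod : i % 2 = j % 2
    · exact iSup_layer_adj_of_block (r := j / 4) (by omega)
        (blockLayout_left_adj_right (by omega))
    · exact iSup_layer_adj_of_last (lastLayout_left_adj_right_of_le_of_lt hik hi hjk hmod)
  · exact iSup_layer_adj_of_last (lastLayout_left_adj_right_of_le_of_le hik hi hjk hj)

lemma iSup_layer_apex_adj_left {k j : ℕ} (hj : j < 4 * k + 2) :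
    (⨆ r, layer k r).Adj apex (left j) := by
  rcases Nat.lt_or_ge j (4 * k) with hjk | hjk
  · exact iSup_layer_adj_of_block (by omega) (blockLayout_apex_adj_left rfl)
  · exact iSup_layer_adj_of_last (lastLayout_apex_adj_left hjk hj)

lemma iSup_layer_apex_adj_right {k j : ℕ} (hj : j < 4 * k + 2) :
    (⨆ r, layer k r).Adj apex (right j) := by
  rcases Nat.lt_or_ge j 2 with hj2 | hj2
  · exact iSup_layer_adj_of_last (lastLayout_apex_adj_right hj2)
  by_cases hmod : 2 ≤ j % 4
  · exact iSup_layer_adj_of_block (r := j / 4) (by omega) (blockLayout_apex_adj_right (by omega))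
  · exact iSup_layer_adj_of_block (r := j / 4 - 1) (by omega)
      (blockLayout_apex_adj_right (by omega))

/-- The vertices of the complete tripartite graph with parts of sizes `1`, `n` and `n` as a subset
of `TripartiteVertex`. -/
def ofSigma {n : ℕ} : (Σ i, ![Fin 1, Fin n, Fin n] i) → TripartiteVertex
  | ⟨0, _⟩ => apex
  | ⟨1, (j : Fin n)⟩ => left j
  | ⟨2, (j : Fin n)⟩ => right j

lemma ofSigma_injective {n : ℕ} : (ofSigma (n := n)).Injective := by
  rintro ⟨i, a⟩ ⟨j, b⟩ h
  fin_cases i <;> fin_cases j <;> first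
    | exact congrArg (Sigma.mk 0) (Subsingleton.elim (α := Fin 1) a b)
    | exact congrArg (Sigma.mk 1) (Fin.ext (left.inj h))
    | exact congrArg (Sigma.mk 2) (Fin.ext (right.inj h))
    | nomatch h

lemma iSup_layer_ofSigma_adj {n k : ℕ} (hn : n ≤ 4 * k + 2) :
    ∀ {u v : Σ i, ![Fin 1, Fin n, Fin n] i}, u.1 ≠ v.1 →
      (⨆ r, layer k r).Adj (ofSigma u) (ofSigma v)
  | ⟨0, _⟩, ⟨1, (j : Fin n)⟩, _ => iSup_layer_apex_adj_left (by omega)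
  | ⟨0, _⟩, ⟨2, (j : Fin n)⟩, _ => iSup_layer_apex_adj_right (by omega)
  | ⟨1, (i : Fin n)⟩, ⟨2, (j : Fin n)⟩, _ => iSup_layer_left_adj_right (by omega) (by omega)
  | ⟨1, (j : Fin n)⟩, ⟨0, _⟩, _ => (iSup_layer_apex_adj_left (by omega)).symm
  | ⟨2, (j : Fin n)⟩, ⟨0, _⟩, _ => (iSup_layer_apex_adj_right (by omega)).symm
  | ⟨2, (j : Fin n)⟩, ⟨1, (i : Fin n)⟩, _ => (iSup_layer_left_adj_right (by omega) (by omega)).symm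
  | ⟨2, _⟩, ⟨2, _⟩, h => absurd rfl h

lemma hasPlanarDecomposition_completeMultipartiteGraph_of_le {n k : ℕ} (hn : n ≤ 4 * k + 2) :
    HasPlanarDecomposition (completeMultipartiteGraph ![Fin 1, Fin n, Fin n]) (k + 1) :=
  hasPlanarDecomposition_of_isContained_iSup layer_isPlanar
    ⟨⟨⟨ofSigma, iSup_layer_ofSigma_adj hn⟩, ofSigma_injective⟩⟩

end TripartiteVertex

theorem thickness_K1nn (n : ℕ) (hn : 1 ≤ n) :
    (thickness (completeMultipartiteGraph ![Fin 1, Fin n, Fin n]) : ℤ) = ⌈((n : ℚ) + 2) / 4⌉ := by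
  have hleast : IsLeast {m | HasPlanarDecomposition
      (completeMultipartiteGraph ![Fin 1, Fin n, Fin n]) m} ((n + 1) / 4 + 1) := by
    refine ⟨TripartiteVertex.hasPlanarDecomposition_completeMultipartiteGraph_of_le (by omega),
      fun m hm => ?_⟩
    have hbip : completeBipartiteGraph (Fin n) (Fin n) ⊑
        completeMultipartiteGraph ![Fin 1, Fin n, Fin n] :=
      completeBipartiteGraph_isContained_completeMultipartiteGraph ![Fin 1, Fin n, Fin n]
        (i := 1) (j := 2) (by decide)
    have := (hm.of_isContained hbip).add_two_le_four_mul hn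
    omega
  have hthickness : thickness (completeMultipartiteGraph ![Fin 1, Fin n, Fin n]) =
      (n + 1) / 4 + 1 := hleast.csInf_eq
  have hfloor : 4 * ((n + 1) / 4) < n + 2 ∧ n ≤ 4 * ((n + 1) / 4) + 2 := by omega
  rw [hthickness, eq_comm, Int.ceil_eq_iff]
  qify at hfloor
  push_cast
  constructor <;> linarith
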